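/- arXiv:1509.00797 — 8 statements merged into one kernel-verified Lean document; each statement's English description precedes it below -/
import Mathlib

section
/- Let F be a finite field with q elements and let W be a Weierstrass curve over F with nonzero discriminant (an elliptic curve). Let N be the number of F-rational points of W, i.e. the number of elements of the group W(F) consisting of the affine points of W together with the point at infinity. Then |N − q − 1| ≤ 2·√q. -/
set_option linter.unusedSectionVars false

namespace HasseProof
open Polynomial WeierstrassCurve

section PolyHeight
variable {F : Type*} [Field F]

/-- `d` is the maximum of the degrees of a nonzero vector of polynomials. -/
def IsDeg {n : ℕ} (v : Fin n → F[X]) (d : ℕ) : Prop :=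
  (∀ i, (v i).natDegree ≤ d) ∧ ∃ i, (v i).coeff d ≠ 0

def IsPrim {n : ℕ} (v : Fin n → F[X]) : Prop := ∃ a : Fin n → F[X], ∑ i, a i * v i = 1

lemma IsDeg.eq_of_dvd {n : ℕ} {v w : Fin n → F[X]} {d e : ℕ} (hv : IsDeg v d) (hw : IsDeg w e)
    (h1 : ∀ i, v i ∣ w i) (h2 : ∀ i, w i ∣ v i) : d = e := by
  have hd : ∀ i, (v i).natDegree = (w i).natDegree := fun i =>
    natDegree_eq_of_degree_eq (degree_eq_degree_of_associated (associated_of_dvd_dvd (h1 i) (h2 i)))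
  obtain ⟨i, hi⟩ := hv.2
  obtain ⟨j, hj⟩ := hw.2
  have a := le_natDegree_of_ne_zero hi
  have b := le_natDegree_of_ne_zero hj
  have := hv.1 j
  have := hw.1 i
  have := hd i
  have := hd j
  omega

lemma IsPrim.dvd {n : ℕ} {v w : Fin n → F[X]} (hv : IsPrim v)
    (h : ∀ i j, v i * w j = v j * w i) (i : Fin n) : v i ∣ w i := by
  obtain ⟨a, ha⟩ := hv
  refine ⟨∑ j, a j * w j, ?_⟩
  calc w i = (∑ j, a j * v j) * w i := by rw [ha, one_mul]
    _ = _ := by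
      rw [Finset.sum_mul, Finset.mul_sum]
      refine Finset.sum_congr rfl fun j _ => ?_
      linear_combination -(a j) * h i j

lemma isDeg_eq {n : ℕ} {v w : Fin n → F[X]} {d e : ℕ} (hv : IsDeg v d) (hw : IsDeg w e)
    (pv : IsPrim v) (pw : IsPrim w) (h : ∀ i j, v i * w j = v j * w i) : d = e :=
  hv.eq_of_dvd hw (pv.dvd h) (pw.dvd fun i j => by linear_combination h j i)

/-- symmetric square -/
def sym2 {R : Type*} [CommRing R] (p q : Fin 2 → R) : Fin 3 → R :=
  ![p 0 * q 0, p 0 * q 1 + p 1 * q 0, p 1 * q 1]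

lemma IsPrim.sym2 {p q : Fin 2 → F[X]} (hp : IsPrim p) (hq : IsPrim q) : IsPrim (sym2 p q) := by
  obtain ⟨a, ha⟩ := hp
  obtain ⟨b, hb⟩ := hq
  rw [Fin.sum_univ_two] at ha hb
  -- powers: p0q0, p1q1 and p0q1 * p1q0 type relations
  suffices h : Ideal.span (Set.range (HasseProof.sym2 p q)) = ⊤ by
    have h1 : (1 : F[X]) ∈ Ideal.span (Set.range (HasseProof.sym2 p q)) := h ▸ Submodule.mem_top
    obtain ⟨c, hc⟩ := (Ideal.mem_span_range_iff_exists_fun).1 h1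
    exact ⟨c, hc⟩
  set I := Ideal.span (Set.range (HasseProof.sym2 p q)) with hI
  by_contra hne
  obtain ⟨M, hM, hIM⟩ := Ideal.exists_le_maximal I hne
  have hP := hM.isPrime
  have m : ∀ i, HasseProof.sym2 p q i ∈ M := fun i => hIM (Ideal.subset_span ⟨i, rfl⟩)
  have m0 : p 0 * q 0 ∈ M := m 0
  have m1 : p 0 * q 1 + p 1 * q 0 ∈ M := m 1
  have m2 : p 1 * q 1 ∈ M := m 2
  have n1 : ¬ (p 0 ∈ M ∧ p 1 ∈ M) := fun ⟨x, y⟩ => hP.ne_top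
    ((Ideal.eq_top_iff_one M).2 (ha ▸ M.add_mem (M.mul_mem_left _ x) (M.mul_mem_left _ y)))
  have n2 : ¬ (q 0 ∈ M ∧ q 1 ∈ M) := fun ⟨x, y⟩ => hP.ne_top
    ((Ideal.eq_top_iff_one M).2 (hb ▸ M.add_mem (M.mul_mem_left _ x) (M.mul_mem_left _ y)))
  rcases hP.mem_or_mem m0 with h0 | h0 <;> rcases hP.mem_or_mem m2 with h2 | h2
  · exact n1 ⟨h0, h2⟩
  · have : p 1 * q 0 ∈ M := (M.add_mem_iff_right (M.mul_mem_right _ h0)).1 m1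
    rcases hP.mem_or_mem this with h | h
    · exact n1 ⟨h0, h⟩
    · exact n2 ⟨h, h2⟩
  · have : p 0 * q 1 ∈ M := (M.add_mem_iff_left (M.mul_mem_right _ h2)).1 m1
    rcases hP.mem_or_mem this with h | h
    · exact n1 ⟨h, h2⟩
    · exact n2 ⟨h0, h⟩
  · exact n2 ⟨h0, h2⟩

lemma IsDeg.sym2 {p q : Fin 2 → F[X]} {d e : ℕ} (hp : IsDeg p d) (hq : IsDeg q e) :
    IsDeg (sym2 p q) (d + e) := by
  obtain ⟨hp, hp'⟩ := hp
  obtain ⟨hq, hq'⟩ := hq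
  have c : ∀ i j, (p i * q j).coeff (d + e) = (p i).coeff d * (q j).coeff e := fun i j =>
    coeff_mul_add_eq_of_natDegree_le (hp i) (hq j)
  have n : ∀ i j, (p i * q j).natDegree ≤ d + e := fun i j =>
    natDegree_mul_le_of_le (hp i) (hq j)
  constructor
  · intro i
    fin_cases i
    · exact n 0 0
    · exact natDegree_add_le_of_degree_le (n 0 1) (n 1 0)
    · exact n 1 1
  · by_contra! hcon
    have h0 := hcon 0
    have h1 := hcon 1
    have h2 := hcon 2
    simp only [HasseProof.sym2, Matrix.cons_val_zero, Matrix.cons_val_one, Matrix.cons_val, coeff_add, c] at h0 h1 h2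
    simp only [Fin.exists_fin_two] at hp' hq'
    grind

variable (W : WeierstrassCurve F)

/-- explicit form of `addSubMap`. -/
def asm {R : Type*} [CommRing R] (W : WeierstrassCurve R) (x : Fin 3 → R) : Fin 3 → R :=
  ![x 0 ^ 2 - W.b₄ * x 0 * x 2 - W.b₆ * x 1 * x 2 - W.b₈ * x 2 ^ 2,
    2 * x 1 * x 0 + W.b₂ * x 0 * x 2 + W.b₄ * x 1 * x 2 + W.b₆ * x 2 ^ 2,
    x 1 ^ 2 - 4 * x 0 * x 2]

lemma asm_eq {R : Type*} [CommRing R] (W : WeierstrassCurve R) (x : Fin 3 → R) (i : Fin 3) :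
    asm W x i = (addSubMap W i).eval x := by
  fin_cases i <;> simp [asm, addSubMap]

lemma asm_map {R S : Type*} [CommRing R] [CommRing S] (f : R →+* S) (W : WeierstrassCurve R)
    (x : Fin 3 → R) (i : Fin 3) : asm (W.map f) (fun j => f (x j)) i = f (asm W x i) := by
  fin_cases i <;> simp [asm, map_ofNat]

lemma asm_smul {R : Type*} [CommRing R] (W : WeierstrassCurve R) (c : R)
    (x : Fin 3 → R) (i : Fin 3) : asm W (fun j => c * x j) i = c ^ 2 * asm W x i := by
  fin_cases i <;> simp [asm] <;> ring

lemma IsPrim.asm [W.IsElliptic] {v : Fin 3 → F[X]} (hv : IsPrim v) :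
    IsPrim (asm (W.map (C : F →+* F[X])) v) := by
  obtain ⟨a, ha⟩ := hv
  suffices h : Ideal.span (Set.range (HasseProof.asm (W.map (C : F →+* F[X])) v)) = ⊤ by
    have h1 : (1 : F[X]) ∈ Ideal.span (Set.range (HasseProof.asm (W.map (C : F →+* F[X])) v)) :=
      h ▸ Submodule.mem_top
    obtain ⟨c, hc⟩ := (Ideal.mem_span_range_iff_exists_fun).1 h1
    exact ⟨c, hc⟩
  by_contra hne
  obtain ⟨M, hM, hIM⟩ := Ideal.exists_le_maximal _ hne
  have hP := hM.isPrime
  have m : ∀ i, v i ∈ M := fun i => by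
    refine hP.mem_of_pow_mem 4 ?_
    rw [← addSubMapCoeff_condition (W.map (C : F →+* F[X])) v i]
    refine M.sum_mem fun j _ => M.mul_mem_left _ ?_
    rw [← asm_eq]
    exact hIM (Ideal.subset_span ⟨j, rfl⟩)
  exact hP.ne_top ((Ideal.eq_top_iff_one M).2 (ha ▸ M.sum_mem fun i _ => M.mul_mem_left _ (m i)))

lemma IsDeg.asm [W.IsElliptic] {v : Fin 3 → F[X]} {d : ℕ} (hv : IsDeg v d) :
    IsDeg (asm (W.map (C : F →+* F[X])) v) (d + d) := by
  obtain ⟨hv, i, hi⟩ := hv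
  have c : ∀ i j, (v i * v j).coeff (d + d) = (v i).coeff d * (v j).coeff d := fun i j =>
    coeff_mul_add_eq_of_natDegree_le (hv i) (hv j)
  have n : ∀ i j, (v i * v j).natDegree ≤ d + d := fun i j =>
    natDegree_mul_le_of_le (hv i) (hv j)
  have nC : ∀ (a : F) i j, (C a * (v i * v j)).natDegree ≤ d + d := fun a i j =>
    (natDegree_C_mul_le _ _).trans (n i j)
  have e : HasseProof.asm (W.map (C : F →+* F[X])) v =
    ![v 0 * v 0 - C W.b₄ * (v 0 * v 2) - C W.b₆ * (v 1 * v 2) - C W.b₈ * (v 2 * v 2),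
    C 2 * (v 1 * v 0) + C W.b₂ * (v 0 * v 2) + C W.b₄ * (v 1 * v 2) + C W.b₆ * (v 2 * v 2),
    v 1 * v 1 - C 4 * (v 0 * v 2)] := by
    have h2 : (C 2 : F[X]) = 2 := rfl
    have h4 : (C 4 : F[X]) = 4 := rfl
    ext i : 1
    fin_cases i <;> simp [HasseProof.asm, h2, h4] <;> ring
  have e2 : (fun i => (HasseProof.asm (W.map (C : F →+* F[X])) v i).coeff (d + d)) =
      HasseProof.asm W fun i => (v i).coeff d := by
    rw [e]
    ext i
    fin_cases i <;> simp [HasseProof.asm, c] <;> ring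
  constructor
  · rw [e]
    intro i
    fin_cases i
    · exact natDegree_sub_le_of_le (natDegree_sub_le_of_le (natDegree_sub_le_of_le (n _ _) (nC _ _ _))
        (nC _ _ _)) (nC _ _ _) |>.trans (by simp)
    · exact natDegree_add_le_of_degree_le (natDegree_add_le_of_degree_le
        (natDegree_add_le_of_degree_le (nC _ _ _) (nC _ _ _)) (nC _ _ _)) (nC _ _ _)
    · exact natDegree_sub_le_of_le (n _ _) (nC _ _ _) |>.trans (by simp)
  · have : (fun i => (v i).coeff d) ≠ 0 := fun h => hi (congrFun h i)
    have := addSubMap_ne_zero W this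
    obtain ⟨j, hj⟩ := Function.ne_iff.1 this
    refine ⟨j, ?_⟩
    have := congrFun e2 j
    rw [this, asm_eq]
    exact hj

end PolyHeight

section Sym
variable {K : Type*} [Field K] [DecidableEq K] (W : WeierstrassCurve K)

lemma sym2x_self [W.IsElliptic] (P : W.toAffine.Point) (hP : P ≠ 0) :
    ∃ k : K, k ≠ 0 ∧ ∀ i, asm W (P.sym2x P) i = k * (P + P).sym2x (P - P) i := by
  rw [sub_self]
  have hne : (fun i => asm W (P.sym2x P) i) ≠ 0 := by
    simp_rw [asm_eq]
    exact addSubMap_ne_zero W (Affine.Point.sym2x_ne_zero P P)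
  cases P with
  | zero => exact absurd rfl hP
  | some x y e =>
  have q := (W.toAffine.equation_iff _ _).1 e.1
  rw [Affine.Point.sym2x_some_some] at *
  have h1 : asm W ![x * x, x + x, 1] 1 = (2 * y + W.a₁ * x + W.a₃) ^ 2 := by
    simp [asm, b₂, b₄, b₆]
    linear_combination (-4) * q
  have h2 : asm W ![x * x, x + x, 1] 2 = 0 := by
    simp [asm]
    ring
  by_cases hy : y = W.toAffine.negY x y
  · rw [Affine.Point.add_self_of_Y_eq hy, Affine.Point.sym2x_zero_zero]
    have h1' : asm W ![x * x, x + x, 1] 1 = 0 := by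
      rw [h1, sq_eq_zero_iff]
      simp only [Affine.negY] at hy
      linear_combination hy
    refine ⟨asm W ![x * x, x + x, 1] 0, ?_, ?_⟩
    · intro h0
      apply hne
      ext i
      fin_cases i
      · exact h0
      · exact h1'
      · exact h2
    · intro i
      fin_cases i
      · simp
      · simp [h1']
      · simp [h2]
  · have hψ : 2 * y + W.a₁ * x + W.a₃ ≠ 0 := fun h => hy (by
      simp only [Affine.negY]; linear_combination h)
    rw [Affine.Point.add_self_of_Y_ne hy, Affine.Point.sym2x_some_zero,
      Affine.slope_of_Y_ne rfl hy]
    refine ⟨(2 * y + W.a₁ * x + W.a₃) ^ 2, pow_ne_zero _ hψ, ?_⟩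
    have hs : y - W.toAffine.negY x y = 2 * y + W.a₁ * x + W.a₃ := by
      simp only [Affine.negY]; ring
    rw [hs]
    obtain ⟨ψ, hψd⟩ : ∃ ψ, ψ = 2 * y + W.a₁ * x + W.a₃ := ⟨_, rfl⟩
    rw [← hψd] at h1 hψ ⊢
    intro i
    fin_cases i
    · simp [asm, Affine.addX, b₂, b₄, b₆, b₈]
      field_simp
      subst hψd
      grind
    · simp [h1]
    · simp [h2]

/-- The main formula. -/
lemma sym2x_add_sub [W.IsElliptic] (P Q : W.toAffine.Point) :
    ∃ k : K, k ≠ 0 ∧ ∀ i, asm W (P.sym2x Q) i = k * (P + Q).sym2x (P - Q) i := by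
  by_cases hP : P = 0
  · subst hP
    rw [zero_add, zero_sub, Affine.Point.sym2x_neg_right]
    refine ⟨1, one_ne_zero, ?_⟩
    cases Q with
    | zero =>
      rw [← Affine.Point.zero_def, Affine.Point.sym2x_zero_zero]
      intro i; fin_cases i <;> simp [asm]
    | some x y h =>
      rw [Affine.Point.sym2x_zero_some, Affine.Point.sym2x_some_some]
      intro i; fin_cases i <;> simp [asm] <;> ring
  by_cases hQ : Q = 0
  · subst hQ
    rw [add_zero, sub_zero]
    refine ⟨1, one_ne_zero, ?_⟩
    cases P with
    | zero => exact absurd rfl hP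
    | some x y h =>
      rw [Affine.Point.sym2x_some_zero, Affine.Point.sym2x_some_some]
      intro i; fin_cases i <;> simp [asm] <;> ring
  by_cases h1 : Q = P
  · subst h1
    exact sym2x_self W Q hP
  by_cases h2 : Q = -P
  · subst h2
    obtain ⟨k, hk, h⟩ := sym2x_self W P hP
    refine ⟨k, hk, fun i => ?_⟩
    rw [Affine.Point.sym2x_neg_right, h, Affine.Point.sym2x_comm, sub_neg_eq_add, sub_eq_add_neg]
  cases P with
  | zero => exact absurd rfl hP
  | some x₁ y₁ e₁ =>
  cases Q with
  | zero => exact absurd rfl hQ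
  | some x₂ y₂ e₂ =>
  have hx : x₁ ≠ x₂ := fun h => by
    rcases Affine.Point.X_eq_iff (h₁ := e₁) (h₂ := e₂) |>.1 h with h | h
    · exact h1 h.symm
    · exact h2 (by rw [h, neg_neg])
  have q₁ := (W.toAffine.equation_iff _ _).1 e₁.1
  have q₂ := (W.toAffine.equation_iff _ _).1 e₂.1
  have hx' : x₁ - x₂ ≠ 0 := sub_ne_zero.2 hx
  refine ⟨(x₁ - x₂) ^ 2, pow_ne_zero 2 hx', ?_⟩
  rw [sub_eq_add_neg (Affine.Point.some _ _ e₁), Affine.Point.neg_some, Affine.Point.add_of_X_ne hx, Affine.Point.add_of_X_ne hx,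
    Affine.Point.sym2x_some_some, Affine.Point.sym2x_some_some, Affine.slope_of_X_ne hx,
    Affine.slope_of_X_ne hx]
  simp only [Affine.addX, Affine.negY]
  obtain ⟨a₁, a₂, a₃, a₄, a₆⟩ := W
  simp only at q₁ q₂
  intro i
  fin_cases i
  · simp [asm, b₂, b₄, b₆, b₈]
    field_simp
    grind
  · simp [asm, b₂, b₄, b₆, b₈]
    field_simp
    linear_combination (-2) * q₁ + (-2) * q₂
  · simp [asm]
    ring
end Sym

section Par
variable {F : Type*} [Field F] {K : Type*} [Field K] [DecidableEq K] [Algebra F K]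
  (W : WeierstrassCurve F) [W.IsElliptic] (ι : F[X] →ₐ[F] K)

def HasHeight (R : (W.toAffine.baseChange K).Point) (d : ℕ) : Prop :=
  ∃ f : Fin 2 → F[X], IsPrim f ∧ IsDeg f d ∧ R.xRep 0 * ι (f 1) = R.xRep 1 * ι (f 0)

variable {W ι}

lemma exists_scale (hι : Function.Injective ι) {R : (W.toAffine.baseChange K).Point}
    {f : Fin 2 → F[X]} (hf : IsPrim f) (h : R.xRep 0 * ι (f 1) = R.xRep 1 * ι (f 0)) :
    ∃ c : K, c ≠ 0 ∧ ∀ i, ι (f i) = c * R.xRep i := by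
  have hne : ¬ (f 0 = 0 ∧ f 1 = 0) := by
    rintro ⟨h0, h1⟩
    obtain ⟨a, ha⟩ := hf
    simp [h0, h1] at ha
  have hι0 : ∀ x, ι x = 0 ↔ x = 0 := fun x => map_eq_zero_iff ι hι
  cases R with
  | zero =>
    simp [Affine.Point.xRep] at h
    refine ⟨ι (f 0), ?_, ?_⟩
    · rw [Ne, hι0]
      exact fun h0 => hne ⟨h0, (hι0 _).1 h⟩
    · intro i; fin_cases i <;> simp [Affine.Point.xRep, h]
  | some x y hxy =>
    simp [Affine.Point.xRep] at h
    refine ⟨ι (f 1), ?_, ?_⟩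
    · rw [Ne, hι0]
      intro h1
      rw [h1, map_zero, mul_zero, eq_comm, hι0] at h
      exact hne ⟨h, h1⟩
    · intro i; fin_cases i <;> simp [Affine.Point.xRep, ← h, mul_comm]

lemma parallelogram (hι : Function.Injective ι) {P Q : (W.toAffine.baseChange K).Point}
    {d₁ d₂ d₃ d₄ : ℕ} (h₁ : HasHeight W ι P d₁) (h₂ : HasHeight W ι Q d₂)
    (h₃ : HasHeight W ι (P + Q) d₃) (h₄ : HasHeight W ι (P - Q) d₄) :
    d₃ + d₄ = 2 * d₁ + 2 * d₂ := by
  obtain ⟨f₁, p₁, e₁, r₁⟩ := h₁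
  obtain ⟨f₂, p₂, e₂, r₂⟩ := h₂
  obtain ⟨f₃, p₃, e₃, r₃⟩ := h₃
  obtain ⟨f₄, p₄, e₄, r₄⟩ := h₄
  obtain ⟨c₁, n₁, s₁⟩ := exists_scale hι p₁ r₁
  obtain ⟨c₂, n₂, s₂⟩ := exists_scale hι p₂ r₂
  obtain ⟨c₃, n₃, s₃⟩ := exists_scale hι p₃ r₃
  obtain ⟨c₄, n₄, s₄⟩ := exists_scale hι p₄ r₄
  obtain ⟨k, hk, hs⟩ := sym2x_add_sub (W.map (algebraMap F K)) P Q
  have t₁ : (fun i => ι (sym2 f₁ f₂ i)) = fun i => (c₁ * c₂) * P.sym2x Q i := by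
    ext i; fin_cases i <;> simp [sym2, Affine.Point.sym2x, s₁, s₂] <;> ring
  have t₃ : ∀ i, ι (sym2 f₃ f₄ i) = (c₃ * c₄) * (P + Q).sym2x (P - Q) i := by
    intro i; fin_cases i <;> simp [sym2, Affine.Point.sym2x, s₃, s₄] <;> ring
  have key : ∀ i, ι (asm (W.map C) (sym2 f₁ f₂) i) =
      (c₁ * c₂) ^ 2 * k * (P + Q).sym2x (P - Q) i := by
    intro i
    have hc : (ι : F[X] →+* K).comp C = algebraMap F K := ι.comp_algebraMap
    have := asm_map (ι : F[X] →+* K) (W.map C) (sym2 f₁ f₂) i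
    simp only [RingHom.coe_coe] at this
    rw [← this, t₁, WeierstrassCurve.map_map, hc, asm_smul]
    exact (congrArg ((c₁ * c₂) ^ 2 * ·) (hs i)).trans (mul_assoc _ _ _).symm
  have := isDeg_eq (e₃.sym2 e₄) ((e₁.sym2 e₂).asm W) (p₃.sym2 p₄) ((p₁.sym2 p₂).asm W) (by
    intro i j
    apply hι
    rw [map_mul, map_mul, key, key, t₃, t₃]
    ring)
  omega

end Par

end HasseProof

namespace HasseProof
open Polynomial WeierstrassCurve
open scoped Polynomial.Bivariate

section CR
variable {F : Type*} [Field F] (W : WeierstrassCurve F)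

abbrev CR := W.toAffine.CoordinateRing
abbrev FF := W.toAffine.FunctionField

noncomputable def yA : CR W := Affine.CoordinateRing.mk W.toAffine Y
/-- embedding of polynomials -/
noncomputable def jA : F[X] →+* CR W :=
  (Affine.CoordinateRing.mk W.toAffine).comp C

lemma jA_eq (p : F[X]) : algebraMap F[X] (CR W) p = jA W p := rfl

noncomputable def lin : F[X] := C W.a₁ * X + C W.a₃
noncomputable def cub : F[X] := X ^ 3 + C W.a₂ * X ^ 2 + C W.a₄ * X + C W.a₆

lemma yA_sq : yA W ^ 2 = jA W (cub W) - jA W (lin W) * yA W := by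
  have : yA W ^ 2 = Affine.CoordinateRing.mk W.toAffine (C (X ^ 3 + C W.a₂ * X ^ 2 + C W.a₄ * X + C W.a₆) -
      C (C W.a₁ * X + C W.a₃) * Y) := AdjoinRoot.mk_eq_mk.mpr ⟨1, by
        rw [Affine.polynomial]; ring1⟩
  rw [this, map_sub, map_mul]
  simp only [jA, yA, lin, cub, RingHom.comp_apply]

lemma basis_exists (z : CR W) : ∃ p r : F[X], z = jA W p + jA W r * yA W := by
  obtain ⟨p, q, h⟩ := Affine.CoordinateRing.exists_smul_basis_eq z
  refine ⟨p, q, ?_⟩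
  rw [← h, Affine.CoordinateRing.smul, Affine.CoordinateRing.smul, mul_one]
  rfl

lemma basis_unique {p r : F[X]} (h : jA W p + jA W r * yA W = 0) : p = 0 ∧ r = 0 := by
  apply Affine.CoordinateRing.smul_basis_eq_zero (W' := W.toAffine)
  rw [Affine.CoordinateRing.smul, Affine.CoordinateRing.smul, mul_one]
  exact h

lemma jA_inj : Function.Injective (jA W) := by
  rw [injective_iff_map_eq_zero]
  intro a h
  exact (basis_unique W (p := a) (r := 0) (by rw [h]; simp)).1

lemma eval₂_poly {S : Type*} [CommRing S] (i : F[X] →+* S) (z : S) :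
    eval₂ i z W.toAffine.polynomial = z ^ 2 + i (lin W) * z - i (cub W) := by
  have : (Affine.polynomial W.toAffine) = Y ^ 2 + C (lin W) * Y - C (cub W) := by
    rw [Affine.polynomial]; rfl
  rw [this]
  simp only [eval₂_sub, eval₂_add, eval₂_mul, eval₂_pow, eval₂_X, eval₂_C]

/-- The involution. -/
noncomputable def sA : CR W →ₐ[F[X]] CR W :=
  AdjoinRoot.liftAlgHom _ (Algebra.ofId F[X] (CR W)) (-yA W - jA W (lin W)) (by
    refine (eval₂_poly W _ _).trans ?_
    have h := yA_sq W
    change (-yA W - jA W (lin W)) ^ 2 + jA W (lin W) * (-yA W - jA W (lin W)) - jA W (cub W) = 0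
    linear_combination h)

lemma sA_y : sA W (yA W) = -yA W - jA W (lin W) := by
  unfold sA yA
  exact AdjoinRoot.liftAlgHom_root ..

lemma sA_j (p : F[X]) : sA W (jA W p) = jA W p := (sA W).commutes p

lemma sA_sA (z : CR W) : sA W (sA W z) = z := by
  obtain ⟨p, r, rfl⟩ := basis_exists W z
  simp only [map_add, map_mul, map_sub, map_neg, sA_j, sA_y]
  ring

lemma norm_exists (z : CR W) : ∃ n : F[X], z * sA W z = jA W n := by
  obtain ⟨p, r, rfl⟩ := basis_exists W z
  refine ⟨p ^ 2 - p * r * lin W - r ^ 2 * cub W, ?_⟩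
  simp only [map_add, map_mul, map_sub, map_neg, sA_j, sA_y, map_pow]
  linear_combination (-(jA W r) ^ 2) * yA_sq W

variable [W.IsElliptic]

lemma y_ne : (2 : F) ≠ 0 ∨ lin W ≠ 0 := by
  by_contra! h
  obtain ⟨h2, hl⟩ := h
  have h1 : W.a₁ = 0 := by simpa [lin] using congrArg (coeff · 1) hl
  have h3 : W.a₃ = 0 := by simpa [lin] using congrArg (coeff · 0) hl
  apply W.isUnit_Δ.ne_zero
  simp only [Δ, b₂, b₄, b₆, b₈, h1, h3]
  linear_combination (-8 * W.a₂ ^ 2 * (4 * W.a₂ * W.a₆ - W.a₄ ^ 2) - 32 * W.a₄ ^ 3 - 216 * W.a₆ ^ 2 +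
    144 * W.a₂ * W.a₄ * W.a₆) * h2

lemma fixed (z : CR W) (h : sA W z = z) : ∃ p, z = jA W p := by
  obtain ⟨p, r, rfl⟩ := basis_exists W z
  simp only [map_add, map_mul, map_sub, map_neg, sA_j, sA_y] at h
  have := basis_unique W (p := - r * lin W) (r := -2 * r) (by
    simp only [map_mul, map_neg, map_ofNat]; linear_combination h)
  have hr : r = 0 := by
    rcases y_ne W with h2 | h2
    · have h2' : (2 : F[X]) ≠ 0 := fun h => h2 (by simpa using congrArg (coeff · 0) h)
      simpa [h2'] using this.2
    · simpa [h2] using this.1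
  exact ⟨p, by simp [hr]⟩

end CR

section FFs
variable {F : Type*} [Field F] (W : WeierstrassCurve F)

noncomputable def io : F[X] →ₐ[F] FF W := IsScalarTower.toAlgHom F F[X] (FF W)

lemma io_eq (p : F[X]) : io W p = algebraMap (CR W) (FF W) (jA W p) := by
  simp only [io, IsScalarTower.coe_toAlgHom', ← jA_eq]
  exact IsScalarTower.algebraMap_apply _ _ _ _

lemma io_inj : Function.Injective (io W) := by
  intro a b h
  rw [io_eq, io_eq] at h
  exact jA_inj W (IsFractionRing.injective _ _ h)

lemma sA_inj : Function.Injective (sA W) := Function.LeftInverse.injective (sA_sA W)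

noncomputable def sK : FF W →ₐ[F[X]] FF W :=
  IsFractionRing.liftAlgHom (g := (IsScalarTower.toAlgHom F[X] (CR W) (FF W)).comp (sA W))
    ((IsFractionRing.injective (CR W) (FF W)).comp (sA_inj W))

lemma sK_alg (z : CR W) : sK W (algebraMap _ _ z) = algebraMap (CR W) (FF W) (sA W z) := by
  exact IsFractionRing.lift_algebraMap
    (g := ((IsScalarTower.toAlgHom F[X] (CR W) (FF W)).comp (sA W)).toRingHom)
    ((IsFractionRing.injective (CR W) (FF W)).comp (sA_inj W)) z

variable [W.IsElliptic]

lemma fixedK (z : FF W) (h : sK W z = z) : ∃ p n, n ≠ 0 ∧ z * io W n = io W p := by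
  obtain ⟨a, b, hb, rfl⟩ := IsFractionRing.div_surjective (A := CR W) z
  have hb0 : b ≠ 0 := nonZeroDivisors.ne_zero hb
  have hb1 : algebraMap (CR W) (FF W) b ≠ 0 := by simpa using hb0
  have hsb1 : algebraMap (CR W) (FF W) (sA W b) ≠ 0 := by
    simpa using (map_ne_zero_iff (sA W) (sA_inj W)).2 hb0
  rw [map_div₀, sK_alg, sK_alg, div_eq_div_iff hsb1 hb1, ← map_mul, ← map_mul] at h
  replace h := IsFractionRing.injective _ _ h
  obtain ⟨n, hn⟩ := norm_exists W b
  obtain ⟨p, hp⟩ := fixed W (a * sA W b) (by rw [map_mul, sA_sA]; exact h)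
  refine ⟨p, n, ?_, ?_⟩
  · rintro rfl
    rw [map_zero, mul_eq_zero, map_eq_zero_iff _ (sA_inj W)] at hn
    simp [hb0] at hn
  · rw [io_eq, io_eq, ← hn, ← hp, map_mul, map_mul]
    field_simp

lemma exists_isDeg {f : Fin 2 → F[X]} (hf : IsPrim f) : ∃ d, IsDeg f d := by
  have hne : ¬ (f 0 = 0 ∧ f 1 = 0) := by
    rintro ⟨h0, h1⟩
    obtain ⟨a, ha⟩ := hf
    simp [h0, h1] at ha
  by_cases h0 : f 0 = 0
  · have h1 : f 1 ≠ 0 := fun h => hne ⟨h0, h⟩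
    exact ⟨(f 1).natDegree, fun i => by fin_cases i <;> simp [h0], 1, by simpa using h1⟩
  by_cases h1 : f 1 = 0
  · exact ⟨(f 0).natDegree, fun i => by fin_cases i <;> simp [h1], 0, by simpa using h0⟩
  rcases le_total (f 0).natDegree (f 1).natDegree with h | h
  · exact ⟨(f 1).natDegree, fun i => by fin_cases i; exacts [h, le_rfl], 1, by simpa using h1⟩
  · exact ⟨(f 0).natDegree, fun i => by fin_cases i; exacts [le_rfl, h], 0, by simpa using h0⟩

lemma exists_prim (p n : F[X]) (hn : n ≠ 0) :
    ∃ (g : F[X]) (f : Fin 2 → F[X]), g ≠ 0 ∧ IsPrim f ∧ p = g * f 0 ∧ n = g * f 1 := by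
  classical
  have hg : EuclideanDomain.gcd p n ≠ 0 := fun h => hn (EuclideanDomain.gcd_eq_zero_iff.1 h).2
  obtain ⟨a, ha⟩ := EuclideanDomain.gcd_dvd_left p n
  obtain ⟨b, hb⟩ := EuclideanDomain.gcd_dvd_right p n
  refine ⟨EuclideanDomain.gcd p n, ![a, b], hg, ⟨![EuclideanDomain.gcdA p n, EuclideanDomain.gcdB p n], ?_⟩, ha, hb⟩
  have := EuclideanDomain.gcd_eq_gcd_ab p n
  rw [Fin.sum_univ_two]
  apply mul_left_cancel₀ hg
  simp only [Matrix.cons_val_zero, Matrix.cons_val_one]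
  linear_combination -EuclideanDomain.gcdA p n * ha - EuclideanDomain.gcdB p n * hb - this


lemma exists_height [DecidableEq (FF W)] (R : (W.toAffine.baseChange (FF W)).Point)
    (h : Affine.Point.map ((sK W).restrictScalars F) R = -R) : ∃ d, HasHeight W (io W) R d := by
  cases R with
  | zero =>
    exact ⟨0, ![1, 0], ⟨![1, 0], by simp⟩, ⟨fun i => by fin_cases i <;> simp, 0, by simp⟩, by
      simp [Affine.Point.xRep]⟩
  | some x y e =>
    rw [Affine.Point.map_some, Affine.Point.neg_some] at h
    obtain ⟨p, n, hn, hx⟩ := fixedK W x (by simpa using (Affine.Point.some.inj h).1)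
    obtain ⟨g, f, hg, hp, h1, h2⟩ := exists_prim p n hn
    obtain ⟨d, hd⟩ := exists_isDeg hp
    refine ⟨d, _, hp, hd, ?_⟩
    have hg' : io W g ≠ 0 := by
      rwa [Ne, map_eq_zero_iff _ (io_inj W)]
    rw [h1, h2, map_mul, map_mul] at hx
    apply mul_left_cancel₀ hg'
    rw [Affine.Point.xRep_some]
    simp only [Matrix.cons_val_zero, Matrix.cons_val_one, one_mul]
    linear_combination hx

end FFs
end HasseProof

namespace HasseProof
open Polynomial WeierstrassCurve

section Pts
variable {F : Type*} [Field F] (W : WeierstrassCurve F) [W.IsElliptic]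

noncomputable def xK : FF W := io W X
noncomputable def yK : FF W := algebraMap (CR W) (FF W) (yA W)

lemma io_C (a : F) : io W (C a) = algebraMap F (FF W) a := (io W).commutes a

lemma io_lin : io W (lin W) = algebraMap F (FF W) W.a₁ * xK W + algebraMap F (FF W) W.a₃ := by
  simp only [lin, map_add, map_mul, io_C]; rfl

lemma io_cub : io W (cub W) = xK W ^ 3 + algebraMap F (FF W) W.a₂ * xK W ^ 2 +
    algebraMap F (FF W) W.a₄ * xK W + algebraMap F (FF W) W.a₆ := by
  simp only [cub, map_add, map_mul, io_C, map_pow]; rfl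

lemma yK_sq : yK W ^ 2 = io W (cub W) - io W (lin W) * yK W := by
  rw [yK, ← map_pow, yA_sq, map_sub, map_mul, io_eq, io_eq]

lemma gen_eq : (W.toAffine.baseChange (FF W)).Equation (xK W) (yK W) := by
  rw [Affine.equation_iff]
  have := yK_sq W
  rw [io_lin, io_cub] at this
  change yK W ^ 2 + algebraMap F (FF W) W.a₁ * xK W * yK W + algebraMap F (FF W) W.a₃ * yK W = xK W ^ 3 + algebraMap F (FF W) W.a₂ * xK W ^ 2 +
    algebraMap F (FF W) W.a₄ * xK W + algebraMap F (FF W) W.a₆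
  linear_combination this

noncomputable def gP : (W.toAffine.baseChange (FF W)).Point :=
  .some (xK W) (yK W) (by
    haveI : (W.toAffine.baseChange (FF W)).IsElliptic :=
      inferInstanceAs ((W.map (algebraMap F (FF W))).IsElliptic)
    exact Affine.equation_iff_nonsingular.mp (gen_eq W))

lemma sK_xK : sK W (xK W) = xK W := (sK W).commutes X
lemma sK_yK : sK W (yK W) = -yK W - io W (lin W) := by
  rw [yK, sK_alg, sA_y, map_sub, map_neg, io_eq]

variable [DecidableEq (FF W)]

/-- anti-invariant points -/
def Anti (R : (W.toAffine.baseChange (FF W)).Point) : Prop :=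
  Affine.Point.map ((sK W).restrictScalars F) R = -R

variable {W} in
lemma Anti.add {R S} (h : Anti W R) (h' : Anti W S) : Anti W (R + S) := by
  unfold Anti at *
  rw [map_add, h, h']; abel
variable {W} in
lemma Anti.neg {R} (h : Anti W R) : Anti W (-R) := by
  unfold Anti at *
  rw [map_neg, h]
variable {W} in
lemma Anti.zsmul {R} (h : Anti W R) (n : ℤ) : Anti W (n • R) := by
  unfold Anti at *
  rw [map_zsmul, h]; simp

lemma anti_gP : Anti W (gP W) := by
  unfold Anti gP
  rw [Affine.Point.map_some, Affine.Point.neg_some]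
  congr 1
  · exact sK_xK W
  · refine (sK_yK W).trans ?_
    rw [io_lin, Affine.negY]
    change _ = -yK W - algebraMap F (FF W) W.a₁ * xK W - algebraMap F (FF W) W.a₃
    ring

lemma height_zero : HasHeight W (io W) 0 0 :=
  ⟨![1, 0], ⟨![1, 0], by simp⟩, ⟨fun i => by fin_cases i <;> simp, 0, by simp⟩, by simp⟩

lemma height_gP : HasHeight W (io W) (gP W) 1 :=
  ⟨![X, 1], ⟨![0, 1], by simp⟩, ⟨fun i => by fin_cases i <;> simp, 0, by simp⟩, by simp [gP, xK]⟩

variable [Fintype F]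

noncomputable def gQ : (W.toAffine.baseChange (FF W)).Point :=
  Affine.Point.map (FiniteField.frobeniusAlgHom F (FF W)) (gP W)

lemma gQ_eq : ∃ h, gQ W = .some (xK W ^ Fintype.card F) (yK W ^ Fintype.card F) h := by
  unfold gQ gP
  rw [Affine.Point.map_some]
  exact ⟨_, rfl⟩

lemma anti_gQ : Anti W (gQ W) := by
  have h := anti_gP W
  unfold Anti gQ at *
  rw [← map_neg, ← h, Affine.Point.map_map, Affine.Point.map_map]
  congr 2
  refine AlgHom.ext fun z => ?_
  simp

lemma height_gQ : HasHeight W (io W) (gQ W) (Fintype.card F) := by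
  obtain ⟨h, hQ⟩ := gQ_eq W
  refine ⟨![X ^ Fintype.card F, 1], ⟨![0, 1], by simp⟩, ⟨fun i => by fin_cases i <;> simp, 0, by simp⟩, ?_⟩
  rw [hQ]
  simp [xK]

/-- The quadratic argument. -/
theorem bound_of_height {N : ℕ} (hN : HasHeight W (io W) (gQ W - gP W) N) :
    ((N : ℤ) - Fintype.card F - 1) ^ 2 ≤ 4 * Fintype.card F := by
  have par := fun {P Q d₁ d₂ d₃ d₄} => parallelogram (W := W) (P := P) (Q := Q) (d₁ := d₁) (d₂ := d₂) (d₃ := d₃) (d₄ := d₄) (io_inj W)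
  have uniq : ∀ R d e, HasHeight W (io W) R d → HasHeight W (io W) R e → d = e := by
    intro R d e h1 h2
    have := par h1 (height_zero W) (by rwa [add_zero]) (by rwa [sub_zero])
      (d₃ := e) (d₄ := e)
    omega
  have ex : ∀ m n : ℤ, ∃ d, HasHeight W (io W) (m • gQ W + n • gP W) d := fun m n =>
    exists_height W _ (((anti_gQ W).zsmul m).add ((anti_gP W).zsmul n))
  choose H hH using ex
  have hp := height_gP W
  have hq := height_gQ W
  set q := Fintype.card F
  have h1 : H 1 1 + N = 2 * q + 2 * 1 := par hq hp (by simpa using hH 1 1) hN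
  have h2 : H 1 0 = q := uniq _ _ _ (hH 1 0) (by simpa using hq)
  have h3 : H 2 0 + 0 = 2 * q + 2 * q := par hq hq (by simpa [two_zsmul] using hH 2 0)
    (by simpa using height_zero W)
  have h4 : H 2 1 + 1 = 2 * H 1 1 + 2 * q := by
    refine par (hH 1 1) hq ?_ (d₄ := 1) ?_
    · convert hH 2 1 using 1; simp [two_zsmul]; abel
    · convert hp using 1; simp
  have h5 : ∀ n : ℤ, H 2 (n + 1) + H 2 (n - 1) = 2 * H 2 n + 2 * 1 := by
    intro n
    refine par (hH 2 n) hp ?_ ?_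
    · convert hH 2 (n + 1) using 1; simp [add_zsmul]; abel
    · convert hH 2 (n - 1) using 1; simp [sub_zsmul]; abel
  have key : ∀ n : ℕ, (H 2 n : ℤ) = n ^ 2 + 2 * (q + 1 - N) * n + 4 * q ∧
      (H 2 (n + 1) : ℤ) = (n + 1) ^ 2 + 2 * (q + 1 - N) * (n + 1) + 4 * q := by
    intro n
    induction n with
    | zero => simp; constructor <;> [skip; zify at *] <;> grind
    | succ k ih =>
      have := h5 (k + 1)
      rw [add_sub_cancel_right] at this
      push_cast
      zify at this
      refine ⟨ih.2, ?_⟩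
      linear_combination this - ih.1 + 2 * ih.2
  have key' : ∀ n : ℕ, (H 2 (-n) : ℤ) = n ^ 2 - 2 * (q + 1 - N) * n + 4 * q ∧
      (H 2 (1 - n) : ℤ) = (n - 1) ^ 2 - 2 * (q + 1 - N) * (n - 1) + 4 * q := by
    intro n
    induction n with
    | zero => 
      have := key 0
      simp at this ⊢
      refine ⟨this.1, this.2.trans (by ring)⟩
    | succ k ih =>
      have := h5 (-k)
      rw [show (-k + 1 : ℤ) = 1 - k by ring, show (-k - 1 : ℤ) = -(k + 1) by ring] at this
      push_cast
      rw [show (1 - (k + 1) : ℤ) = - k by ring]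
      zify at this
      refine ⟨?_, by linear_combination ih.1⟩
      linear_combination this - ih.2 + 2 * ih.1
  have fin : ∀ n : ℤ, 0 ≤ n ^ 2 + 2 * (q + 1 - N) * n + 4 * q := by
    intro n
    obtain ⟨k, rfl | rfl⟩ := n.eq_nat_or_neg
    · rw [← (key k).1]; positivity
    · have := (key' k).1
      have h0 : (0 : ℤ) ≤ H 2 (-k) := by positivity
      linarith
  have := fin (N - q - 1)
  linarith

end Pts
end HasseProof

namespace HasseProof
open Polynomial WeierstrassCurve

section Loc
variable {F : Type*} [Field F] (W : WeierstrassCurve F)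

noncomputable def xA : CR W := jA W X

lemma jA_C (a : F) : jA W (C a) = algebraMap F (CR W) a := rfl

lemma jA_lin : jA W (lin W) = algebraMap F (CR W) W.a₁ * xA W + algebraMap F (CR W) W.a₃ := by
  simp only [lin, map_add, map_mul, jA_C]; rfl

lemma jA_cub : jA W (cub W) = xA W ^ 3 + algebraMap F (CR W) W.a₂ * xA W ^ 2 +
    algebraMap F (CR W) W.a₄ * xA W + algebraMap F (CR W) W.a₆ := by
  simp only [cub, map_add, map_mul, jA_C, map_pow]; rfl

lemma eqA : yA W ^ 2 + algebraMap F (CR W) W.a₁ * xA W * yA W + algebraMap F (CR W) W.a₃ * yA W =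
    xA W ^ 3 + algebraMap F (CR W) W.a₂ * xA W ^ 2 +
    algebraMap F (CR W) W.a₄ * xA W + algebraMap F (CR W) W.a₆ := by
  have := yA_sq W
  rw [jA_lin, jA_cub] at this
  linear_combination this

lemma sA_xA : sA W (xA W) = xA W := sA_j W X
lemma sA_alg (a : F) : sA W (algebraMap F (CR W) a) = algebraMap F (CR W) a := sA_j W (C a)

/-- numerator of the x-coordinate of the sum of `(x₁,y₁)` and `(x₂,y₂)`. -/
noncomputable def num (x₁ y₁ x₂ y₂ : CR W) : CR W :=
  (y₁ - y₂) ^ 2 + algebraMap F (CR W) W.a₁ * (y₁ - y₂) * (x₁ - x₂) -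
    (algebraMap F (CR W) W.a₂ + x₁ + x₂) * (x₁ - x₂) ^ 2

lemma dvd_of_jA {a b : F[X]} {w : CR W} (h : jA W b = jA W a * w) : a ∣ b := by
  obtain ⟨p, r, rfl⟩ := basis_exists W w
  have := (basis_unique W (p := a * p - b) (r := a * r) (by
    simp only [map_mul, map_sub]; linear_combination -h)).1
  exact ⟨p, by linear_combination -this⟩

/-- evaluation -/
noncomputable def ev {S : Type*} [CommRing S] [Algebra F S] (x₀ : F) (y₀ : S)
    (h : y₀ ^ 2 + algebraMap F S ((lin W).eval x₀) * y₀ - algebraMap F S ((cub W).eval x₀) = 0) :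
    CR W →+* S :=
  AdjoinRoot.lift ((algebraMap F S).comp (evalRingHom x₀)) y₀ (by rw [eval₂_poly]; exact h)

variable {W} in
lemma ev_y {S : Type*} [CommRing S] [Algebra F S] {x₀ : F} {y₀ : S} (h) :
    ev W x₀ y₀ h (yA W) = y₀ := by
  unfold ev yA; exact AdjoinRoot.lift_root _

variable {W} in
lemma ev_j {S : Type*} [CommRing S] [Algebra F S] {x₀ : F} {y₀ : S} (h) (p : F[X]) :
    ev W x₀ y₀ h (jA W p) = algebraMap F S (p.eval x₀) := by
  unfold ev jA; exact AdjoinRoot.lift_of _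

variable [Fintype F]

local notation "q" => Fintype.card F
local notation "al" => algebraMap F (CR W)

lemma frob_add (a b : CR W) : (a + b) ^ q = a ^ q + b ^ q :=
  map_add (FiniteField.frobeniusAlgHom F (CR W)) a b
lemma frob_sub (a b : CR W) : (a - b) ^ q = a ^ q - b ^ q :=
  map_sub (FiniteField.frobeniusAlgHom F (CR W)) a b
lemma frob_neg (a : CR W) : (- a) ^ q = - a ^ q :=
  map_neg (FiniteField.frobeniusAlgHom F (CR W)) a
lemma frob_al (a : F) : (al a) ^ q = al a :=
  (FiniteField.frobeniusAlgHom F (CR W)).commutes a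

lemma eqAq : (yA W ^ q) ^ 2 + al W.a₁ * xA W ^ q * yA W ^ q + al W.a₃ * yA W ^ q =
    (xA W ^ q) ^ 3 + al W.a₂ * (xA W ^ q) ^ 2 + al W.a₄ * xA W ^ q + al W.a₆ := by
  have h := congrArg (FiniteField.frobeniusAlgHom F (CR W)) (eqA W)
  simpa only [map_add, map_mul, map_pow, AlgHom.commutes, FiniteField.coe_frobeniusAlgHom] using h

lemma sA_yA : sA W (yA W) = - yA W - al W.a₁ * xA W - al W.a₃ := by
  rw [sA_y, jA_lin]; ring

lemma sA_yAq : (- yA W - al W.a₁ * xA W - al W.a₃) ^ q =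
    - yA W ^ q - al W.a₁ * xA W ^ q - al W.a₃ := by
  rw [frob_sub, frob_sub, frob_neg, mul_pow, frob_al, frob_al]

variable [W.IsElliptic]

noncomputable def Mm : CR W := num W (xA W ^ q) (yA W ^ q) (xA W) (sA W (yA W))
noncomputable def Mp : CR W := num W (xA W ^ q) (yA W ^ q) (xA W) (yA W)

lemma exists_m : ∃ m, Mm W = jA W m := by
  apply fixed
  unfold Mm num
  simp only [map_add, map_sub, map_mul, map_pow, sA_xA, sA_alg, sA_sA]
  rw [sA_yA, sA_yAq]
  ring

lemma exists_p : ∃ m, Mp W = jA W m := by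
  apply fixed
  unfold Mp num
  simp only [map_add, map_sub, map_mul, map_pow, sA_xA, sA_alg, sA_sA]
  rw [sA_yA, sA_yAq]
  ring

lemma num_add {R : Type*} [CommRing R] {a₁ a₂ a₃ a₄ a₆ x₁ y₁ x₂ y₂ : R}
    (h₁ : y₁ ^ 2 + a₁ * x₁ * y₁ + a₃ * y₁ = x₁ ^ 3 + a₂ * x₁ ^ 2 + a₄ * x₁ + a₆)
    (h₂ : y₂ ^ 2 + a₁ * x₂ * y₂ + a₃ * y₂ = x₂ ^ 3 + a₂ * x₂ ^ 2 + a₄ * x₂ + a₆) :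
    ((y₁ - y₂) ^ 2 + a₁ * (y₁ - y₂) * (x₁ - x₂) - (a₂ + x₁ + x₂) * (x₁ - x₂) ^ 2) +
    ((y₁ - (-y₂ - a₁ * x₂ - a₃)) ^ 2 + a₁ * (y₁ - (-y₂ - a₁ * x₂ - a₃)) * (x₁ - x₂) -
      (a₂ + x₁ + x₂) * (x₁ - x₂) ^ 2) =
    2 * x₁ ^ 2 * x₂ + 2 * x₁ * x₂ ^ 2 + (a₁ ^ 2 + 4 * a₂) * x₁ * x₂ +
      (2 * a₄ + a₁ * a₃) * (x₁ + x₂) + (a₃ ^ 2 + 4 * a₆) := by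
  linear_combination 2 * h₁ + 2 * h₂

lemma num_mul {R : Type*} [CommRing R] {a₁ a₂ a₃ a₄ a₆ x₁ y₁ x₂ y₂ : R}
    (h₁ : y₁ ^ 2 + a₁ * x₁ * y₁ + a₃ * y₁ = x₁ ^ 3 + a₂ * x₁ ^ 2 + a₄ * x₁ + a₆)
    (h₂ : y₂ ^ 2 + a₁ * x₂ * y₂ + a₃ * y₂ = x₂ ^ 3 + a₂ * x₂ ^ 2 + a₄ * x₂ + a₆) :
    ((y₁ - y₂) ^ 2 + a₁ * (y₁ - y₂) * (x₁ - x₂) - (a₂ + x₁ + x₂) * (x₁ - x₂) ^ 2) *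
    ((y₁ - (-y₂ - a₁ * x₂ - a₃)) ^ 2 + a₁ * (y₁ - (-y₂ - a₁ * x₂ - a₃)) * (x₁ - x₂) -
      (a₂ + x₁ + x₂) * (x₁ - x₂) ^ 2) =
    (x₁ - x₂) ^ 2 * (x₁ ^ 2 * x₂ ^ 2 - (2 * a₄ + a₁ * a₃) * x₁ * x₂ -
      (a₃ ^ 2 + 4 * a₆) * (x₁ + x₂) -
      (a₁ ^ 2 * a₆ + 4 * a₂ * a₆ - a₁ * a₃ * a₄ + a₂ * a₃ ^ 2 - a₄ ^ 2)) := by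
  grind

end Loc
end HasseProof

namespace HasseProof
open Polynomial WeierstrassCurve

lemma natDegree_trick {F : Type*} [Field F] {a b : F[X]} {d : ℕ} (hs : (a + b).natDegree ≤ d)
    (hm : (a * b).natDegree = 2 * d) (h0 : a * b ≠ 0) : a.natDegree = d := by
  rw [natDegree_mul (left_ne_zero_of_mul h0) (right_ne_zero_of_mul h0)] at hm
  rcases lt_trichotomy a.natDegree b.natDegree with h | h | h
  · rw [natDegree_add_eq_right_of_natDegree_lt h] at hs; omega
  · omega
  · rw [natDegree_add_eq_left_of_natDegree_lt h] at hs; omega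

lemma natDegree_aux {F : Type*} [Field F] {n : ℕ} (hq : 2 ≤ n) {m p : F[X]} {b₂ b₄ b₆ b₈ : F}
    (h1 : m + p = 2 * (X ^ n) ^ 2 * X + 2 * X ^ n * X ^ 2 +
      C b₂ * X ^ n * X + C b₄ * (X ^ n + X) + C b₆)
    (h2 : m * p = (X ^ n - X) ^ 2 * ((X ^ n) ^ 2 * X ^ 2 - (C b₄ * X ^ n * X +
      C b₆ * (X ^ n + X) + C b₈))) : m.natDegree = 2 * n + 1 := by
  have hX : ∀ k l : ℕ, ∀ c : F, k ≤ l → (C c * X ^ k).natDegree ≤ l := fun k l c h =>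
    (natDegree_C_mul_X_pow_le c k).trans h
  have hd1 : ((X ^ n - X : F[X]) ^ 2).natDegree = 2 * n := by
    rw [natDegree_pow, natDegree_sub_eq_left_of_natDegree_lt, natDegree_X_pow]
    rw [natDegree_X_pow, natDegree_X]; omega
  obtain ⟨G, hG⟩ : ∃ G, G = ((X ^ n) ^ 2 * X ^ 2 - (C b₄ * X ^ n * X +
      C b₆ * (X ^ n + X) + C b₈) : F[X]) := ⟨_, rfl⟩
  have hd2 : G.natDegree = 2 * n + 2 := by
    have e1 : ((X ^ n) ^ 2 * X ^ 2 : F[X]) = X ^ (2 * n + 2) := by ring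
    rw [hG, e1, natDegree_sub_eq_left_of_natDegree_lt, natDegree_X_pow]
    rw [natDegree_X_pow]
    refine lt_of_le_of_lt (b := n + 1) ?_ (by omega)
    rw [mul_assoc, ← pow_succ, mul_add]
    refine natDegree_add_le_of_degree_le (natDegree_add_le_of_degree_le (hX _ _ _ le_rfl)
      (natDegree_add_le_of_degree_le (hX _ _ _ (by omega)) ?_)) (by simp)
    simpa using hX 1 (n + 1) _ (by omega)
  rw [← hG] at h2
  have hn1 : ((X ^ n - X : F[X]) ^ 2) ≠ 0 := fun h => by
    rw [h, natDegree_zero] at hd1; omega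
  have hn2 : G ≠ 0 := fun h => by rw [h, natDegree_zero] at hd2; omega
  refine natDegree_trick (b := p) ?_ ?_ ?_
  · rw [h1]
    have e : 2 * (X ^ n) ^ 2 * X + 2 * X ^ n * X ^ 2 +
      C b₂ * X ^ n * X + C b₄ * (X ^ n + X) +
      C b₆ = C 2 * X ^ (2 * n + 1) + C 2 * X ^ (n + 2) +
      C b₂ * X ^ (n + 1) + (C b₄ * X ^ n +
       C b₄ * X ^ 1) + C b₆ * X ^ 0 := by
      rw [show (C 2 : F[X]) = 2 from map_ofNat _ _]
      ring
    rw [e]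
    refine natDegree_add_le_of_degree_le (natDegree_add_le_of_degree_le (natDegree_add_le_of_degree_le
      (natDegree_add_le_of_degree_le ?_ ?_) ?_) (natDegree_add_le_of_degree_le ?_ ?_)) ?_ <;>
    exact hX _ _ _ (by omega)
  · rw [h2, natDegree_mul hn1 hn2, hd1, hd2]; ring
  · rw [h2]; exact mul_ne_zero hn1 hn2

lemma prod_eq (F : Type*) [Field F] [Fintype F] :
    ∏ a : F, (X - C a) = X ^ Fintype.card F - X := by
  have hq : 1 < Fintype.card F := Fintype.one_lt_card
  have h := prod_multiset_X_sub_C_of_monic_of_roots_card_eq (p := (X ^ Fintype.card F - X : F[X]))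
    (monic_X_pow_sub (by rw [degree_X]; exact_mod_cast hq)) (by
      rw [FiniteField.roots_X_pow_card_sub_X, FiniteField.X_pow_card_sub_X_natDegree_eq _ hq]; rfl)
  rw [FiniteField.roots_X_pow_card_sub_X] at h
  exact h

section Loc
variable {F : Type*} [Field F] (W : WeierstrassCurve F) [Fintype F]

local notation "q" => Fintype.card F
local notation "al" => algebraMap F (CR W)

variable [W.IsElliptic]

lemma natDegree_m {m : F[X]} (hm : Mm W = jA W m) : m.natDegree = 2 * q + 1 := by
  have hq : 2 ≤ q := Fintype.one_lt_card
  obtain ⟨p, hp⟩ := exists_p W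
  have h1 := num_add (eqAq W) (eqA W)
  have h2 := num_mul (eqAq W) (eqA W)
  unfold Mp num at hp
  unfold Mm num at hm
  rw [sA_yA] at hm
  rw [hm, hp] at h1 h2
  have h1' : m + p = 2 * (X ^ q) ^ 2 * X + 2 * X ^ q * X ^ 2 +
      C (W.a₁ ^ 2 + 4 * W.a₂) * X ^ q * X + C (2 * W.a₄ + W.a₁ * W.a₃) * (X ^ q + X) +
      C (W.a₃ ^ 2 + 4 * W.a₆) := by
    apply jA_inj W
    simp only [map_add, map_mul, map_pow, map_ofNat, jA_C]
    change _ = 2 * (xA W ^ q) ^ 2 * xA W + 2 * xA W ^ q * xA W ^ 2 + (_ ^ 2 + _) * xA W ^ q * xA W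
      + _ * (xA W ^ q + xA W) + _
    rw [add_comm, h1]
  have h2' : m * p = (X ^ q - X) ^ 2 * ((X ^ q) ^ 2 * X ^ 2 - (C (2 * W.a₄ + W.a₁ * W.a₃) * X ^ q * X +
      C (W.a₃ ^ 2 + 4 * W.a₆) * (X ^ q + X) + C (W.a₁ ^ 2 * W.a₆ + 4 * W.a₂ * W.a₆ - W.a₁ * W.a₃ * W.a₄ + W.a₂ * W.a₃ ^ 2 - W.a₄ ^ 2))) := by
    apply jA_inj W
    simp only [map_add, map_mul, map_pow, map_ofNat, map_sub, jA_C]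
    rw [mul_comm, h2]
    change _ = (xA W ^ q - xA W) ^ 2 * ((xA W ^ q) ^ 2 * xA W ^ 2 - (_ * xA W ^ q * xA W +
      _ * (xA W ^ q + xA W) + _))
    ring
  exact natDegree_aux hq h1' h2'

lemma xA_sub (x₀ : F) : jA W (X - C x₀) = xA W - al x₀ := by rw [map_sub, jA_C]; rfl

lemma D_eq (x₀ : F) : xA W ^ q - xA W = (xA W - al x₀) ^ q - (xA W - al x₀) := by
  rw [frob_sub, frob_al]; ring

/-- two points -/
lemma eval_m {m : F[X]} (hm : Mm W = jA W m) {x₀ y₀ : F}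
    (h : y₀ ^ 2 + (lin W).eval x₀ * y₀ - (cub W).eval x₀ = 0) :
    m.eval x₀ = (y₀ - (- y₀ - (lin W).eval x₀)) ^ 2 := by
  have hx : ev W x₀ y₀ h (xA W) = x₀ := by unfold xA; rw [ev_j]; simp
  have := congrArg (ev W x₀ y₀ h) hm
  rw [ev_j] at this
  unfold Mm num at this
  rw [sA_y] at this
  simp only [map_add, map_sub, map_neg, map_mul, map_pow, ev_y, ev_j, hx, FiniteField.pow_card,
    Algebra.algebraMap_self, RingHom.id_apply] at this
  rw [← this]; ring

lemma one_pt {m : F[X]} (hm : Mm W = jA W m) {x₀ y₀ : F}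
    (h : y₀ ^ 2 + (lin W).eval x₀ * y₀ - (cub W).eval x₀ = 0)
    (h' : y₀ = - y₀ - (lin W).eval x₀) : ¬ (X - C x₀) ^ 2 ∣ m := by
  have hx : ev W x₀ y₀ h (xA W) = x₀ := by unfold xA; rw [ev_j]; simp
  have hal : ∀ a, ev W x₀ y₀ h (al a) = a := fun a => by rw [← jA_C, ev_j]; simp
  have hl : (lin W).eval x₀ = W.a₁ * x₀ + W.a₃ := by simp [lin]
  have hc : (cub W).eval x₀ = x₀ ^ 3 + W.a₂ * x₀ ^ 2 + W.a₄ * x₀ + W.a₆ := by simp [cub]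
  rw [hl] at h'
  have hh := h
  rw [hl, hc] at hh
  have heq : W.toAffine.Equation x₀ y₀ := by
    rw [Affine.equation_iff]; linear_combination hh
  have hns := Affine.equation_iff_nonsingular.1 heq
  rw [Affine.nonsingular_iff] at hns
  obtain ⟨c₄, hc₄⟩ : ∃ c, c = 3 * x₀ ^ 2 + 2 * W.a₂ * x₀ + W.a₄ - W.a₁ * y₀ := ⟨_, rfl⟩
  have hc0 : c₄ ≠ 0 := by
    rintro rfl
    rcases hns.2 with h3 | h3
    · exact h3 (by linear_combination hc₄)
    · exact h3 (by linear_combination h')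
  rintro ⟨g, hg⟩
  have hq : 2 ≤ q := Fintype.one_lt_card
  obtain ⟨t, ht⟩ : ∃ t, t = xA W - al x₀ := ⟨_, rfl⟩
  obtain ⟨u, hu⟩ : ∃ u, u = yA W - al y₀ := ⟨_, rfl⟩
  have hD := D_eq W x₀
  have huq : yA W ^ q = u ^ q + al y₀ := by rw [hu, frob_sub, frob_al]; ring
  obtain ⟨k, hk⟩ := Nat.exists_eq_add_of_le hq
  have hA1 := congrArg al hc₄
  have hA2 := congrArg al h'
  have hA3 := congrArg al hh
  simp only [map_add, map_sub, map_mul, map_pow, map_neg, map_ofNat, map_zero] at hA1 hA2 hA3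
  obtain ⟨s, hs⟩ : ∃ s, s = t ^ 2 + (al W.a₂ + 3 * al x₀) * t + al c₄ - al W.a₁ * u := ⟨_, rfl⟩
  have hus : u ^ 2 = t * s := by
    have := eqA W
    rw [hs, ht, hu]
    linear_combination this - hA3 - (xA W - al x₀) * hA1 - (yA W - al y₀) * hA2
  obtain ⟨w, hw⟩ : ∃ w, 2 * u ^ q * u = t ^ 2 * w := by
    rcases Nat.eq_zero_or_pos k with rfl | hk0
    · have : (2 : CR W) = 0 := by
        have h2 : ((q : ℕ) : F) = 0 := Nat.cast_card_eq_zero F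
        rw [hk] at h2
        have := congrArg al h2
        rw [map_natCast, map_zero] at this
        exact_mod_cast this
      exact ⟨0, by rw [this]; ring⟩
    · obtain ⟨l, rfl⟩ := Nat.exists_eq_add_of_le hk0
      refine ⟨2 * s ^ 2 * u ^ l, ?_⟩
      rw [hk]
      linear_combination 2 * u ^ l * (u ^ 2 + t * s) * hus
  have huq2 : u ^ q = t * (s * u ^ k) := by
    rw [hk, pow_add, hus]; ring
  have htq : t ^ q = t ^ 2 * t ^ k := by rw [hk, pow_add]
  have hM : ∃ r, Mm W = t * al c₄ + t ^ 2 * r := by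
    unfold Mm num
    rw [sA_yA, hD, ← ht]
    have hv : yA W ^ q - (-yA W - al W.a₁ * xA W - al W.a₃) = u ^ q + u + al W.a₁ * t := by
      rw [huq, hu, ht]; linear_combination hA2
    rw [hv]
    have e1 : t ^ q - t = t * (t * t ^ k - 1) := by rw [htq]; ring
    have e2 : t ^ q - t = t ^ 2 * t ^ k - t := by rw [htq]
    refine ⟨w + (s * u ^ k) ^ 2 + al W.a₁ * (s * u ^ k)
       + (t + (al W.a₂ + 3 * al x₀)) + al W.a₁ * (u ^ q + u + al W.a₁ * t) * t ^ k -
      (al W.a₂ + xA W ^ q + xA W) * (t * t ^ k - 1) ^ 2, ?_⟩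
    rw [e1]
    linear_combination hw + hus + t * hs + (u ^ q + t * (s * u ^ k) + al W.a₁ * t) * huq2 
  obtain ⟨r, hr⟩ := hM
  rw [hm, hg, map_mul, map_pow, xA_sub, ← ht] at hr
  have ht0 : t ≠ 0 := by
    rw [ht, ← xA_sub, Ne, map_eq_zero_iff _ (jA_inj W)]
    exact X_sub_C_ne_zero x₀
  have h3 : t * jA W g = al c₄ + t * r := by
    apply mul_left_cancel₀ ht0; linear_combination hr
  have h4 := congrArg (ev W x₀ y₀ h) h3
  rw [map_add, map_mul, map_mul, hal, ht, map_sub, hx, hal] at h4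
  exact hc0 (by linear_combination -h4)

lemma no_pt {m : F[X]} (hm : Mm W = jA W m) {x₀ : F}
    (h : ∀ y₀ : F, y₀ ^ 2 + (lin W).eval x₀ * y₀ - (cub W).eval x₀ ≠ 0) : (X - C x₀) ^ 2 ∣ m := by
  let L := AlgebraicClosure F
  obtain ⟨y₁, hy₁⟩ : ∃ y₁ : L, y₁ ^ 2 + algebraMap F L ((lin W).eval x₀) * y₁ -
      algebraMap F L ((cub W).eval x₀) = 0 := by
    obtain ⟨y, hy⟩ := IsAlgClosed.exists_root (k := L) (C 1 * X ^ 2 + C (algebraMap F L ((lin W).eval x₀)) * X +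
      C (- algebraMap F L ((cub W).eval x₀))) (by
        rw [degree_quadratic one_ne_zero]; decide)
    refine ⟨y, ?_⟩
    simp [IsRoot] at hy
    linear_combination hy
  have hF : ∀ a : F, algebraMap F L a ≠ y₁ := by
    rintro a rfl
    apply h a
    apply (algebraMap F L).injective
    simpa using hy₁
  have hdvd : ∀ z : CR W, ev W x₀ y₁ hy₁ z = 0 → ∃ w, z = jA W (X - C x₀) * w := by
    intro z hz
    obtain ⟨p, r, rfl⟩ := basis_exists W z
    rw [map_add, map_mul, ev_j, ev_j, ev_y] at hz
    have hr : r.eval x₀ = 0 := by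
      by_contra hr
      apply hF (- p.eval x₀ / r.eval x₀)
      have : algebraMap F L (r.eval x₀) ≠ 0 := by simpa using hr
      rw [map_div₀, map_neg, div_eq_iff this]
      linear_combination -hz
    have hp : p.eval x₀ = 0 := by simpa [hr] using hz
    obtain ⟨p', rfl⟩ := dvd_iff_isRoot.2 hp
    obtain ⟨r', rfl⟩ := dvd_iff_isRoot.2 hr
    exact ⟨jA W p' + jA W r' * yA W, by simp only [map_mul]; ring⟩
  have hyq : y₁ ^ q ≠ y₁ := by
    intro hy
    have h1 := congrArg (fun p => aeval y₁ p) (prod_eq F)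
    simp only [map_prod, map_sub, aeval_X, aeval_C, map_pow, hy, sub_self] at h1
    obtain ⟨a, -, ha⟩ := Finset.prod_eq_zero_iff.1 h1
    exact hF a (sub_eq_zero.1 ha).symm
  have hyq2 : (y₁ ^ q) ^ 2 + algebraMap F L ((lin W).eval x₀) * y₁ ^ q -
      algebraMap F L ((cub W).eval x₀) = 0 := by
    have := congrArg (FiniteField.frobeniusAlgHom F L) hy₁
    simpa only [map_add, map_sub, map_zero, map_mul, map_pow, AlgHom.commutes, FiniteField.coe_frobeniusAlgHom] using this
  have hv : y₁ ^ q - (- y₁ - algebraMap F L ((lin W).eval x₀)) = 0 := by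
    apply mul_left_cancel₀ (sub_ne_zero.2 hyq)
    linear_combination hyq2 - hy₁
  obtain ⟨w, hw⟩ := hdvd (yA W ^ q - sA W (yA W)) (by
    rw [sA_y, map_sub, map_pow, map_sub, map_neg, ev_y, ev_j]; exact hv)
  have hq : q ≠ 0 := Fintype.card_ne_zero
  obtain ⟨k, hk⟩ := Nat.exists_eq_succ_of_ne_zero hq
  have hD : xA W ^ q - xA W = jA W (X - C x₀) * ((xA W - al x₀) ^ k - 1) := by
    rw [D_eq W x₀, hk, xA_sub, pow_succ]; ring
  apply dvd_of_jA W (w := w ^ 2 + al W.a₁ * w * ((xA W - al x₀) ^ k - 1) -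
    (al W.a₂ + xA W ^ q + xA W) * ((xA W - al x₀) ^ k - 1) ^ 2)
  rw [← hm]
  unfold Mm num
  rw [hw, hD, map_pow]
  ring

end Loc
end HasseProof

namespace HasseProof
open Polynomial WeierstrassCurve

section Fin
variable {F : Type*} [Field F] (W : WeierstrassCurve F) [Fintype F] [DecidableEq F]

local notation "q" => Fintype.card F

/-- number of points over a given x-coordinate -/
noncomputable def np (x₀ : F) : ℕ :=
  (Finset.univ.filter fun y₀ : F => y₀ ^ 2 + (lin W).eval x₀ * y₀ - (cub W).eval x₀ = 0).card

variable [W.IsElliptic]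

lemma eqn_iff (x₀ y₀ : F) : W.toAffine.Equation x₀ y₀ ↔
    y₀ ^ 2 + (lin W).eval x₀ * y₀ - (cub W).eval x₀ = 0 := by
  have hl : (lin W).eval x₀ = W.a₁ * x₀ + W.a₃ := by simp [lin]
  have hc : (cub W).eval x₀ = x₀ ^ 3 + W.a₂ * x₀ ^ 2 + W.a₄ * x₀ + W.a₆ := by simp [cub]
  rw [Affine.equation_iff, hl, hc]
  constructor <;> intro h <;> linear_combination h

lemma card_points : Nat.card W.toAffine.Point = 1 + ∑ x₀, np W x₀ := by
  have e1 := Nat.card_congr (Affine.pointEquiv W.toAffine)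
  rw [e1]
  have e2 : Nat.card (Option {xy : F × F // W.toAffine.Equation xy.1 xy.2}) =
      1 + ∑ x₀, np W x₀ := by
    rw [Finite.card_option, add_comm]
    congr 1
    have e3 : {xy : F × F // W.toAffine.Equation xy.1 xy.2} ≃
        (x₀ : F) × {y₀ : F // W.toAffine.Equation x₀ y₀} :=
      ⟨fun z => ⟨z.1.1, z.1.2, z.2⟩, fun z => ⟨(z.1, z.2.1), z.2.2⟩, fun _ => rfl, fun _ => rfl⟩
    rw [Nat.card_congr e3, Nat.card_sigma]
    refine Finset.sum_congr rfl fun x₀ _ => ?_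
    rw [np, Nat.card_congr (Equiv.subtypeEquivRight (eqn_iff W x₀)), Nat.card_eq_fintype_card,
      Fintype.card_subtype]
  exact e2

lemma np_cases {m : F[X]} (hm : Mm W = jA W m) (x₀ : F) : np W x₀ ≤ 2 ∧
    (X - C x₀) ^ (2 - np W x₀) ∣ m ∧ (np W x₀ ≠ 0 → ¬ (X - C x₀) ^ (2 - np W x₀ + 1) ∣ m) := by
  by_cases h : ∃ y₀ : F, y₀ ^ 2 + (lin W).eval x₀ * y₀ - (cub W).eval x₀ = 0
  · obtain ⟨y₀, h⟩ := h
    have hn : np W x₀ = ({y₀, - y₀ - (lin W).eval x₀} : Finset F).card := by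
      unfold np
      congr 1
      ext y
      simp only [Finset.mem_filter, Finset.mem_univ, true_and, Finset.mem_insert,
        Finset.mem_singleton]
      rw [← sub_eq_zero (a := y) (b := y₀), ← sub_eq_zero (a := y) (b := - y₀ - (lin W).eval x₀),
        ← mul_eq_zero]
      constructor <;> intro h'
      · linear_combination h' - h
      · linear_combination h' + h
    have hev := eval_m W hm h
    by_cases h' : y₀ = - y₀ - (lin W).eval x₀
    · rw [← h', Finset.pair_eq_singleton, Finset.card_singleton] at hn
      rw [hn]
      refine ⟨by norm_num, ?_, fun _ => one_pt W hm h h'⟩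
      rw [← h', sub_self] at hev
      rw [show 2 - 1 = 1 from rfl, pow_one, dvd_iff_isRoot, IsRoot, hev]
      ring
    · rw [Finset.card_pair h'] at hn
      rw [hn]
      refine ⟨le_rfl, by simp, fun _ => ?_⟩
      rw [show 2 - 2 + 1 = 1 from rfl, pow_one, dvd_iff_isRoot, IsRoot, hev]
      exact pow_ne_zero _ (sub_ne_zero.2 h')
  · push Not at h
    have hn : np W x₀ = 0 := by
      unfold np
      rw [Finset.card_eq_zero, Finset.filter_eq_empty_iff]
      intro y _
      exact h y
    rw [hn]
    exact ⟨by norm_num, no_pt W hm h, fun h => (h rfl).elim⟩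

lemma exists_rep : ∃ (g f₀ f₁ : F[X]), g ≠ 0 ∧ Mm W = jA W (g * f₀) ∧
    (X ^ q - X) ^ 2 = g * f₁ ∧ IsCoprime f₀ f₁ ∧
    f₀.natDegree = 1 + ∑ x₀, np W x₀ ∧ f₁.natDegree = ∑ x₀, np W x₀ := by
  obtain ⟨m, hm⟩ := exists_m W
  have hc := np_cases W hm
  have hdeg := natDegree_m W hm
  have hg : (∏ x₀ : F, (X - C x₀) ^ (2 - np W x₀)) ≠ 0 :=
    Finset.prod_ne_zero_iff.2 fun x₀ _ => pow_ne_zero _ (X_sub_C_ne_zero x₀)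
  obtain ⟨f₀, hf₀⟩ : (∏ x₀ : F, (X - C x₀) ^ (2 - np W x₀)) ∣ m := by
    refine Finset.prod_dvd_of_coprime ?_ fun x₀ _ => (hc x₀).2.1
    intro a _ b _ hab
    exact (pairwise_coprime_X_sub_C Function.injective_id hab).pow
  have hm0 : m ≠ 0 := fun h => by rw [h, natDegree_zero] at hdeg; omega
  have hf0 : f₀ ≠ 0 := fun h => hm0 (by rw [hf₀, h, mul_zero])
  have hdegp : ∀ k : F → ℕ, (∏ x₀ : F, (X - C x₀) ^ k x₀).natDegree = ∑ x₀, k x₀ := by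
    intro k
    rw [natDegree_prod _ _ fun x₀ _ => pow_ne_zero _ (X_sub_C_ne_zero x₀)]
    simp [natDegree_pow]
  refine ⟨_, f₀, ∏ x₀ : F, (X - C x₀) ^ np W x₀, hg, hf₀ ▸ hm, ?_, ?_, ?_, hdegp _⟩
  · rw [← prod_eq, ← Finset.prod_pow, ← Finset.prod_mul_distrib]
    refine Finset.prod_congr rfl fun x₀ _ => ?_
    rw [← pow_add]
    congr 1
    have := (hc x₀).1
    omega
  · refine IsCoprime.prod_right fun x₀ _ => ?_
    by_cases h0 : np W x₀ = 0
    · rw [h0, pow_zero]; exact isCoprime_one_right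
    refine IsCoprime.pow_right ?_
    rw [isCoprime_comm, (irreducible_X_sub_C x₀).coprime_iff_not_dvd]
    intro hd
    apply (hc x₀).2.2 h0
    rw [hf₀, pow_succ]
    exact mul_dvd_mul (Finset.dvd_prod_of_mem (fun x₀ : F => (X - C x₀) ^ (2 - np W x₀)) (Finset.mem_univ x₀)) hd
  · rw [hf₀, natDegree_mul hg hf0, hdegp] at hdeg
    have : ∑ x₀, (2 - np W x₀) + ∑ x₀, np W x₀ = 2 * q := by
      rw [← Finset.sum_add_distrib, Finset.sum_congr rfl (g := fun _ => 2)]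
      · simp [mul_comm]
      · intro x₀ _
        have := (hc x₀).1
        omega
    omega

lemma height_sub [DecidableEq (FF W)] :
    HasHeight W (io W) (gQ W - gP W) (Nat.card W.toAffine.Point) := by
  obtain ⟨g, f₀, f₁, hg, h1, h2, ⟨u, v, huv⟩, hd0, hd1⟩ := exists_rep W
  rw [← card_points] at hd0
  have hd1' : f₁.natDegree ≤ Nat.card W.toAffine.Point := by rw [card_points]; omega
  refine ⟨![f₀, f₁], ⟨![u, v], by simpa using huv⟩, ⟨fun i => ?_, 0, ?_⟩, ?_⟩
  · fin_cases i
    exacts [hd0.le, hd1']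
  · rw [← hd0]
    have : f₀ ≠ 0 := fun h => by
      rw [h, natDegree_zero, card_points] at hd0; omega
    simpa using this
  · have hq : 1 < q := Fintype.one_lt_card
    have hx : xK W ^ q - xK W ≠ 0 := by
      have : io W (X ^ q - X) ≠ 0 := by
        rw [Ne, map_eq_zero_iff _ (io_inj W)]
        exact FiniteField.X_pow_card_sub_X_ne_zero _ hq
      simpa [xK] using this
    obtain ⟨hn, hQ⟩ := gQ_eq W
    rw [sub_eq_add_neg, hQ, gP, Affine.Point.neg_some, Affine.Point.add_of_X_ne (sub_ne_zero.1 hx),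
      Affine.Point.xRep_some, Affine.slope_of_X_ne (sub_ne_zero.1 hx), Affine.addX, Affine.negY]
    simp only [Matrix.cons_val_zero, Matrix.cons_val_one, one_mul]
    change ((_ / _) ^ 2 + algebraMap F (FF W) W.a₁ * (_ / _) - algebraMap F (FF W) W.a₂ - _ - _) * _ = _
    change (((yK W ^ q - (-yK W - algebraMap F (FF W) W.a₁ * xK W - algebraMap F (FF W) W.a₃)) / _) ^ 2 + algebraMap F (FF W) W.a₁ * ((yK W ^ q - (-yK W - algebraMap F (FF W) W.a₁ * xK W - algebraMap F (FF W) W.a₃)) / _) - algebraMap F (FF W) W.a₂ - _ - _) * _ = _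
    have h1' := congrArg (algebraMap (CR W) (FF W)) h1
    have h2' := congrArg (io W) h2
    rw [← io_eq] at h1'
    unfold Mm num at h1'
    rw [sA_yA] at h1'
    have hal : ∀ a, algebraMap (CR W) (FF W) (algebraMap F (CR W) a) = algebraMap F (FF W) a :=
      fun a => (IsScalarTower.algebraMap_apply F (CR W) (FF W) a).symm
    have hxx : algebraMap (CR W) (FF W) (xA W) = xK W := by rw [xK, io_eq]; rfl
    have hyy : algebraMap (CR W) (FF W) (yA W) = yK W := rfl
    have hXX : io W X = xK W := rfl
    simp only [map_add, map_sub, map_mul, map_pow, map_neg, hal, hxx, hyy] at h1'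
    simp only [map_sub, map_mul, map_pow, hXX] at h2'
    have hg' : io W g ≠ 0 := by rwa [Ne, map_eq_zero_iff _ (io_inj W)]
    apply mul_left_cancel₀ hg'
    rw [← h1', mul_left_comm, ← h2']
    field_simp
    ring

end Fin
end HasseProof

/-- **Hasse bound / Riemann hypothesis for elliptic curves over finite fields.**
Let `F` be a finite field with `q` elements and `W` a Weierstrass curve over `F`
with nonzero discriminant.  If `N` is the number of `F`-rational points of `W`
(affine points together with the point at infinity), then `|N - q - 1| ≤ 2√q`. -/
theorem hasse_bound (F : Type*) [Field F] [Fintype F] (W : WeierstrassCurve F)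
    (hΔ : W.Δ ≠ 0) (N : ℕ) (hN : N = Nat.card W.toAffine.Point) :
    |(N : ℝ) - (Fintype.card F : ℝ) - 1| ≤ 2 * Real.sqrt (Fintype.card F) := by
  classical
  have hE : W.IsElliptic := ⟨hΔ.isUnit⟩
  have h := HasseProof.bound_of_height W (HasseProof.height_sub W)
  rw [← hN] at h
  have h' : ((N : ℝ) - Fintype.card F - 1) ^ 2 ≤ 4 * Fintype.card F := by exact_mod_cast h
  have h4 : (2 * Real.sqrt (Fintype.card F)) ^ 2 = 4 * (Fintype.card F : ℝ) := by
    rw [mul_pow, Real.sq_sqrt (by positivity)]; norm_num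
  apply abs_le_of_sq_le_sq _ (by positivity)
  rw [h4]; exact h'
end

section
/- Let f be a formal power series in one variable with integer coefficients. Suppose that in ℚ[[T]] one has f·R = P, where P and R are coprime polynomials with rational coefficients and R has constant term 1. Then all coefficients of P and of R are integers. -/
lemma fatou_aux (Q : Polynomial ℤ) (hQ : Q.IsPrimitive) (N : ℤ) (hN : N ≠ 0) :
    ∀ g : PowerSeries ℤ, g * (Q : PowerSeries ℤ) = PowerSeries.C N → IsUnit (Q.coeff 0) := by
  induction N using UniqueFactorizationMonoid.induction_on_prime with
  | h₁ => exact absurd rfl hN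
  | h₂ x hx =>
    intro g hg
    have := congrArg (PowerSeries.constantCoeff (R := ℤ)) hg
    simp at this
    rw [← this] at hx
    exact isUnit_of_mul_isUnit_right hx
  | h₃ a p ha hp ih =>
    intro g hg
    have hI : (Ideal.span {p}).IsPrime := (Ideal.span_singleton_prime hp.ne_zero).2 hp
    have hmap : PowerSeries.map (Ideal.Quotient.mk (Ideal.span {p})) g *
        PowerSeries.map (Ideal.Quotient.mk (Ideal.span {p})) (Q : PowerSeries ℤ) = 0 := by
      rw [← map_mul, hg]
      ext n
      rw [PowerSeries.coeff_map, PowerSeries.coeff_C]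
      split_ifs
      · rw [map_zero, Ideal.Quotient.eq_zero_iff_mem, Ideal.mem_span_singleton]
        exact dvd_mul_right p a
      · simp
    rcases mul_eq_zero.1 hmap with h0 | h0
    · have hd : ∀ n, ∃ z, PowerSeries.coeff n g = p * z := by
        intro n
        have := congrArg (PowerSeries.coeff n) h0
        rw [PowerSeries.coeff_map, map_zero, Ideal.Quotient.eq_zero_iff_mem,
          Ideal.mem_span_singleton] at this
        exact this
      choose z hz using hd
      have hg' : g = PowerSeries.C p * PowerSeries.mk z := by
        ext n
        rw [PowerSeries.coeff_C_mul, PowerSeries.coeff_mk, hz]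
      apply ih ha (PowerSeries.mk z)
      rw [hg', map_mul, mul_assoc] at hg
      refine mul_left_cancel₀ ?_ hg
      intro h
      have := congrArg (PowerSeries.constantCoeff (R := ℤ)) h
      simp at this
      exact hp.ne_zero this
    · exfalso
      apply hp.not_isUnit
      apply hQ p
      rw [Polynomial.C_dvd_iff_dvd_coeff]
      intro n
      have := congrArg (PowerSeries.coeff n) h0
      rw [PowerSeries.coeff_map, map_zero, Ideal.Quotient.eq_zero_iff_mem,
        Ideal.mem_span_singleton, Polynomial.coeff_coe] at this
      exact this

lemma clear_denoms (p : Polynomial ℚ) : ∃ (q : Polynomial ℤ) (b : ℤ), b ≠ 0 ∧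
    q.map (Int.castRingHom ℚ) = Polynomial.C (b : ℚ) * p := by
  obtain ⟨b, hbm, hb⟩ := IsLocalization.integerNormalization_spec (nonZeroDivisors ℤ) p
  refine ⟨IsLocalization.integerNormalization (nonZeroDivisors ℤ) p, b,
    nonZeroDivisors.ne_zero hbm, ?_⟩
  rw [← Polynomial.smul_eq_C_mul]
  rw [← eq_intCast (algebraMap ℤ ℚ), algebraMap_smul]
  exact hb

/-- If a formal power series `f` with integer coefficients satisfies `f·R = P` in `ℚ[[T]]`
with `P, R` coprime polynomials over `ℚ` and `R` having constant term `1`, then all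
coefficients of `P` and of `R` are integers. -/
theorem coeffs_integral_of_int_powerSeries (f : PowerSeries ℤ) (P R : Polynomial ℚ)
    (hcop : IsCoprime P R) (hR0 : R.coeff 0 = 1)
    (h : PowerSeries.map (Int.castRingHom ℚ) f * (R : PowerSeries ℚ) = (P : PowerSeries ℚ)) :
    (∀ n, ∃ z : ℤ, P.coeff n = (z : ℚ)) ∧ (∀ n, ∃ z : ℤ, R.coeff n = (z : ℚ)) := by
  have key : ∀ n, ∃ z : ℤ, R.coeff n = (z : ℚ) := by
    obtain ⟨U, V, hUV⟩ := hcop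
    obtain ⟨u, b1, hb1, hu⟩ := clear_denoms U
    obtain ⟨v, b2, hb2, hv⟩ := clear_denoms V
    obtain ⟨r, b, hb, hr⟩ := clear_denoms R
    have hrc := r.eq_C_content_mul_primPart
    set c := r.content
    set Q := r.primPart with hQdef
    have hc : Polynomial.C (c : ℚ) * Q.map (Int.castRingHom ℚ) = Polynomial.C (b : ℚ) * R := by
      rw [← hr]
      conv_rhs => rw [hrc]
      simp
    have hunit : IsUnit (Q.coeff 0) := by
      apply fatou_aux Q r.isPrimitive_primPart (b1 * b2 * b)
        (mul_ne_zero (mul_ne_zero hb1 hb2) hb)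
        ((PowerSeries.C b2 * (u : PowerSeries ℤ) * f + PowerSeries.C b1 * (v : PowerSeries ℤ))
          * PowerSeries.C c)
      apply PowerSeries.map_injective (Int.castRingHom ℚ) (RingHom.injective_int _)
      have e1 := congrArg (fun p : Polynomial ℚ => (p : PowerSeries ℚ)) hu
      have e2 := congrArg (fun p : Polynomial ℚ => (p : PowerSeries ℚ)) hv
      have e3 := congrArg (fun p : Polynomial ℚ => (p : PowerSeries ℚ)) hc
      have e4 := congrArg (fun p : Polynomial ℚ => (p : PowerSeries ℚ)) hUV
      simp only [Polynomial.coe_mul, Polynomial.coe_add, Polynomial.coe_C, Polynomial.coe_one,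
        Polynomial.polynomial_map_coe] at e1 e2 e3 e4
      simp only [map_mul, map_add, ← Polynomial.polynomial_map_coe,
        eq_intCast, map_intCast] at e1 e2 e3 e4 ⊢
      rw [← h] at e4
      rw [e1, e2]
      linear_combination ((((b2 : PowerSeries ℚ)) * ((b1 : PowerSeries ℚ)) * (U : PowerSeries ℚ)
        * PowerSeries.map (Int.castRingHom ℚ) f
        + ((b1 : PowerSeries ℚ)) * ((b2 : PowerSeries ℚ)) * (V : PowerSeries ℚ))) * e3
        + (b1 : PowerSeries ℚ) * (b2 : PowerSeries ℚ) * (b : PowerSeries ℚ) * e4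
    have hcoef : ∀ n, (c : ℚ) * (Q.coeff n : ℚ) = b * R.coeff n := by
      intro n
      have := congrArg (fun p => Polynomial.coeff p n) hc
      simpa using this
    have h0 := hcoef 0
    rw [hR0] at h0
    have hbq : (b : ℚ) ≠ 0 := by exact_mod_cast hb
    intro n
    have hn := hcoef n
    refine ⟨Q.coeff 0 * Q.coeff n, ?_⟩
    have hsq : (Q.coeff 0 : ℚ) * Q.coeff 0 = 1 := by
      exact_mod_cast Int.isUnit_mul_self hunit
    apply mul_left_cancel₀ hbq
    push_cast
    linear_combination -hn - (c : ℚ) * Q.coeff n * hsq + (Q.coeff 0 : ℚ) * Q.coeff n * h0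
  refine ⟨fun n => ?_, key⟩
  choose z hz using key
  have := congrArg (PowerSeries.coeff n) h
  rw [Polynomial.coeff_coe, PowerSeries.coeff_mul] at this
  refine ⟨∑ x ∈ Finset.HasAntidiagonal.antidiagonal n, PowerSeries.coeff x.1 f * z x.2, ?_⟩
  rw [← this]
  push_cast
  simp [hz]
end

section
/- Let K ⊆ L be an extension of fields and let f be a formal power series with coefficients in K. If there exist polynomials P, R with coefficients in L such that R ≠ 0 and f·R = P in L[[T]], then there exist polynomials p, r with coefficients in K such that r ≠ 0 and f·r = p in K[[T]]. -/
/-- Apply a linear functional to the coefficients of a polynomial. -/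
theorem exists_poly_functional (K L : Type*) [Field K] [Field L] [Algebra K L]
    (φ : L →ₗ[K] K) (Q : Polynomial L) :
    ∃ q : Polynomial K, ∀ n, q.coeff n = φ (Q.coeff n) := by
  refine ⟨PowerSeries.trunc (Q.natDegree + 1) (PowerSeries.mk fun n => φ (Q.coeff n)), ?_⟩
  intro n
  rw [PowerSeries.coeff_trunc]
  split_ifs with hn
  · simp
  · rw [Polynomial.coeff_eq_zero_of_natDegree_lt (by omega), map_zero]

/-- If a formal power series with coefficients in a field `K` becomes rational over a
field extension `L` of `K`, then it is already rational over `K`. -/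
theorem rational_descends (K L : Type*) [Field K] [Field L] [Algebra K L]
    (f : PowerSeries K) (P R : Polynomial L) (hR : R ≠ 0)
    (h : PowerSeries.map (algebraMap K L) f * (R : PowerSeries L) = (P : PowerSeries L)) :
    ∃ (p r : Polynomial K), r ≠ 0 ∧ f * (r : PowerSeries K) = (p : PowerSeries K) := by
  have hl : R.leadingCoeff ≠ 0 := Polynomial.leadingCoeff_ne_zero.mpr hR
  obtain ⟨φ, hφ⟩ : ∃ φ : L →ₗ[K] K, φ R.leadingCoeff ≠ 0 := by
    by_contra! hc
    exact hl ((Module.forall_dual_apply_eq_zero_iff K R.leadingCoeff).mp hc)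
  obtain ⟨p, hp⟩ := exists_poly_functional K L φ P
  obtain ⟨r, hr⟩ := exists_poly_functional K L φ R
  refine ⟨p, r, ?_, ?_⟩
  · rintro rfl
    exact hφ (by simpa using (hr R.natDegree).symm)
  · ext n
    have hn := congrArg (fun g => φ (PowerSeries.coeff n g)) h
    simp only [PowerSeries.coeff_mul, PowerSeries.coeff_map, Polynomial.coeff_coe, map_sum,
      ← Algebra.smul_def, map_smul, smul_eq_mul] at hn
    simp only [PowerSeries.coeff_mul, Polynomial.coeff_coe, hp, hr]
    exact hn
end

section
/- Let E be a finite-dimensional associative unital algebra over ℚ equipped with a positive involution †. Then E is a semisimple ring. -/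
/-- A finite-dimensional associative unital `ℚ`-algebra carrying a positive involution
(`Tr(α·α†) > 0` for all `α ≠ 0`, where `Tr` is the trace of left multiplication) is
a semisimple ring. -/
theorem semisimple_of_positive_involution (E : Type*) [Ring E] [Algebra ℚ E]
    [FiniteDimensional ℚ E] (dag : E → E)
    (hadd : ∀ x y, dag (x + y) = dag x + dag y)
    (hmul : ∀ x y, dag (x * y) = dag y * dag x)
    (hinv : ∀ x, dag (dag x) = x)
    (hpos : ∀ x : E, x ≠ 0 →
      0 < LinearMap.trace ℚ E (LinearMap.mulLeft ℚ (x * dag x))) :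
    IsSemisimpleRing E := by
  have hart : IsArtinianRing E := IsArtinianRing.of_finite ℚ E
  rw [IsArtinianRing.isSemisimpleRing_iff_jacobson, eq_bot_iff]
  intro x hx
  by_contra hne
  have hx0 : x ≠ 0 := fun h => hne (by simp [h])
  have hmem : x * dag x ∈ Ring.jacobson E := Ideal.mul_mem_right _ _ hx
  obtain ⟨n, hn⟩ := IsSemiprimaryRing.isNilpotent (R := E)
  have hpow : (x * dag x) ^ n = 0 := by
    have h := Ideal.pow_mem_pow hmem n
    rw [hn] at h
    simpa using h
  have hnil : IsNilpotent (LinearMap.mulLeft ℚ (x * dag x)) :=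
    ⟨n, by rw [LinearMap.pow_mulLeft, hpow, LinearMap.mulLeft_zero_eq_zero]⟩
  have ht := (LinearMap.isNilpotent_trace_of_isNilpotent hnil).eq_zero
  exact (hpos x hx0).ne' ht
end

section
/- Let A be a finite-dimensional commutative ℝ-algebra and let † : A → A be an ℝ-linear ring homomorphism with †∘† = id, such that Tr(x·x†) > 0 for every nonzero x ∈ A, where Tr(x) denotes the trace of the ℝ-linear map y ↦ xy on A. Then every ℝ-algebra homomorphism ρ : A → ℂ satisfies ρ(x†) = conj(ρ(x)) for all x ∈ A, where conj denotes complex conjugation. -/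
/-- Let `A` be a finite-dimensional commutative `ℝ`-algebra with an `ℝ`-algebra involution
`d` such that `Tr(x·d x) > 0` for all `x ≠ 0` (trace of left multiplication).  Then every
`ℝ`-algebra homomorphism `ρ : A → ℂ` intertwines `d` with complex conjugation. -/
theorem algHom_involution_conj (A : Type*) [CommRing A] [Algebra ℝ A]
    [FiniteDimensional ℝ A] (d : A →ₐ[ℝ] A)
    (hd : ∀ x, d (d x) = x)
    (hpos : ∀ x : A, x ≠ 0 →
      0 < LinearMap.trace ℝ A (LinearMap.mulLeft ℝ (x * d x)))
    (ρ : A →ₐ[ℝ] ℂ) (x : A) :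
    ρ (d x) = starRingEnd ℂ (ρ x) := by
  classical
  -- the trace form
  let T : A →ₗ[ℝ] ℝ := (LinearMap.trace ℝ A).comp (LinearMap.mul ℝ A)
  have hT : ∀ y : A, y ≠ 0 → 0 < T (y * d y) := hpos
  have hT0 : ∀ y : A, 0 ≤ T (y * d y) := by
    intro y
    by_cases h : y = 0
    · simp [h]
    · exact (hT y h).le
  -- elements of the kernel of `ρ` are zero divisors
  have hker : ∀ b : A, ρ b = 0 → ∃ y : A, y ≠ 0 ∧ b * y = 0 := by
    intro b hb
    by_contra! hcon
    have hinj : Function.Injective (LinearMap.mulLeft ℝ b) := by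
      rw [injective_iff_map_eq_zero]
      intro y hy
      by_contra hne
      exact hcon y hne hy
    obtain ⟨c, hc⟩ := (LinearMap.injective_iff_surjective.mp hinj) 1
    have h1 : ρ (b * c) = 1 := by
      rw [← map_one ρ, ← hc]; rfl
    rw [map_mul, hb, zero_mul] at h1
    exact zero_ne_one h1
  have hreal : ∀ a : A, d a = a → (ρ a).im = 0 := by
    intro a ha
    by_contra hv
    set u := (ρ a).re with hu
    set v := (ρ a).im with hv'
    obtain ⟨y, hy0, hy⟩ := hker ((a - algebraMap ℝ A u) ^ 2 + algebraMap ℝ A (v ^ 2)) (by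
      simp only [map_add, map_pow, map_sub, AlgHom.commutes]
      apply Complex.ext <;> simp [pow_two, ← hu, ← hv'])
    have e : ((a - algebraMap ℝ A u) * y) * d ((a - algebraMap ℝ A u) * y)
        + (v ^ 2) • (y * d y) = 0 := by
      rw [Algebra.smul_def, map_mul, map_sub, ha, AlgHom.commutes]
      linear_combination (d y) * hy
    have e2 := congrArg T e
    rw [map_add, map_smul, map_zero, smul_eq_mul] at e2
    have := hT0 ((a - algebraMap ℝ A u) * y)
    have := mul_pos (pow_pos (abs_pos.mpr hv) 2) (hT y hy0)
    rw [sq_abs] at this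
    linarith
  have himag : ∀ a : A, d a = -a → (ρ a).re = 0 := by
    intro a ha
    by_contra hu0
    have h2 := hreal (a * a) (by rw [map_mul, ha]; ring)
    have hv : (ρ a).im = 0 := by
      rw [map_mul, Complex.mul_im] at h2
      have : (ρ a).re * (ρ a).im = 0 := by linarith
      exact (mul_eq_zero.mp this).resolve_left hu0
    set u := (ρ a).re with hu
    obtain ⟨y, hy0, hy⟩ := hker (a - algebraMap ℝ A u) (by
      simp only [map_sub, AlgHom.commutes]
      apply Complex.ext <;> simp [← hu, hv])
    have e : (a * y) * d (a * y) + (u ^ 2) • (y * d y) = 0 := by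
      rw [Algebra.smul_def, map_mul, ha, map_pow]
      linear_combination (-(a + algebraMap ℝ A u) * d y) * hy
    have e2 := congrArg T e
    rw [map_add, map_smul, map_zero, smul_eq_mul] at e2
    have := hT0 (a * y)
    have := mul_pos (pow_pos (abs_pos.mpr hu0) 2) (hT y hy0)
    rw [sq_abs] at this
    linarith
  have h1 := hreal (x + d x) (by rw [map_add, hd, add_comm])
  have h2 := himag (x - d x) (by rw [map_sub, hd, neg_sub])
  rw [map_add, Complex.add_im] at h1
  rw [map_sub, Complex.sub_re] at h2
  apply Complex.ext
  · rw [Complex.conj_re]; linarith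
  · rw [Complex.conj_im]; linarith
end

section
/- Let K ⊆ L be an extension of fields, let U and U′ be finite-dimensional L-vector spaces, and let b : U × U′ → L be an L-bilinear map. Let M ⊆ U and M′ ⊆ U′ be K-subspaces such that b(m, m′) lies in K for all m ∈ M and m′ ∈ M′, and such that M′ spans U′ over L. Then the quotient K-vector space M / {m ∈ M : b(m, m′) = 0 for all m′ ∈ M′} is finite-dimensional over K, of dimension at most dim_L U′. -/
/-- Given a bilinear pairing `b : U × U' → L` and `K`-subspaces `M ⊆ U`, `M' ⊆ U'`, the
`K`-subspace of `M` consisting of those `m` pairing to zero with every element of `M'`. -/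
def leftKernel (K L : Type*) [Field K] [Field L] [Algebra K L]
    (U U' : Type*) [AddCommGroup U] [Module L U] [AddCommGroup U'] [Module L U']
    [Module K U] [IsScalarTower K L U] [Module K U']
    (b : U →ₗ[L] U' →ₗ[L] L) (M : Submodule K U) (M' : Submodule K U') :
    Submodule K M where
  carrier := {m | ∀ m' ∈ M', b m.1 m' = 0}
  add_mem' := by
    intro x y hx hy m' hm'
    simp only [Submodule.coe_add, map_add, LinearMap.add_apply, hx m' hm', hy m' hm',
      add_zero]
  zero_mem' := by
    intro m' hm'
    simp
  smul_mem' := by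
    intro c x hx m' hm'
    have h1 : ((c • x : M) : U) = algebraMap K L c • (x : U) := by
      rw [Submodule.coe_smul_of_tower, algebraMap_smul]
    rw [h1, map_smul, LinearMap.smul_apply, hx m' hm', smul_zero]

/-- If `b : U × U' → L` is `L`-bilinear, `M ⊆ U` and `M' ⊆ U'` are `K`-subspaces pairing
into `K`, and `M'` spans `U'` over `L`, then `M` modulo the left kernel of the pairing with
`M'` is finite-dimensional over `K` of dimension at most `dim_L U'`. -/
theorem quotient_finiteDimensional_of_pairing (K L : Type*) [Field K] [Field L]
    [Algebra K L] (U U' : Type*) [AddCommGroup U] [Module L U] [AddCommGroup U']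
    [Module L U'] [FiniteDimensional L U] [FiniteDimensional L U']
    [Module K U] [IsScalarTower K L U] [Module K U'] [IsScalarTower K L U']
    (b : U →ₗ[L] U' →ₗ[L] L) (M : Submodule K U) (M' : Submodule K U')
    (hK : ∀ m ∈ M, ∀ m' ∈ M', b m m' ∈ (algebraMap K L).range)
    (hspan : Submodule.span L (M' : Set U') = ⊤) :
    FiniteDimensional K (M ⧸ leftKernel K L U U' b M M') ∧
      Module.finrank K (M ⧸ leftKernel K L U U' b M M') ≤ Module.finrank L U' := by
  classical
  obtain ⟨s, hsM, hs, hli⟩ := exists_linearIndependent L (M' : Set U')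
  rw [hspan] at hs
  have : Finite s := hli.finite
  have : Fintype s := Fintype.ofFinite s
  let B : Module.Basis s L U' := Module.Basis.mk hli (by rw [Subtype.range_coe, hs])
  have hB : ∀ i, B i = (i : U') := fun i => by simp [B]
  have hinj : Function.Injective (algebraMap K L) := (algebraMap K L).injective
  have hex : ∀ (m : M) (i : s), ∃ k : K, algebraMap K L k = b m.1 i.1 := fun m i =>
    hK m.1 m.2 i.1 (hsM i.2)
  choose g hg using hex
  let f : M →ₗ[K] (s → K) :=
    { toFun := g
      map_add' := by
        intro x y
        funext i
        apply hinj
        simp [hg]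
      map_smul' := by
        intro c x
        funext i
        apply hinj
        have h1 : ((c • x : M) : U) = algebraMap K L c • (x : U) := by
          rw [Submodule.coe_smul_of_tower, algebraMap_smul]
        rw [hg, h1, map_smul, LinearMap.smul_apply]
        simp [hg] }
  have hker : leftKernel K L U U' b M M' = LinearMap.ker f := by
    ext m
    rw [LinearMap.mem_ker]
    constructor
    · intro h
      funext i
      apply hinj
      change algebraMap K L (g m i) = algebraMap K L 0
      rw [hg, map_zero]
      exact h i.1 (hsM i.2)
    · intro h m' _
      have h0 : b m.1 = 0 := by
        apply B.ext
        intro i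
        have h2 : g m i = 0 := congrFun h i
        rw [hB, ← hg, h2, map_zero, LinearMap.zero_apply]
      rw [h0, LinearMap.zero_apply]
  rw [hker]
  have hi : Function.Injective ((LinearMap.ker f).liftQ f le_rfl) := by
    rw [← LinearMap.ker_eq_bot]
    exact Submodule.ker_liftQ_eq_bot _ _ _ le_rfl
  refine ⟨FiniteDimensional.of_injective _ hi, ?_⟩
  have h3 := LinearMap.finrank_le_finrank_of_injective hi
  rwa [Module.finrank_fintype_fun_eq_card, ← Module.finrank_eq_card_basis B] at h3
end

section
/- Let K ⊆ L be an extension of fields, let U and U′ be finite-dimensional L-vector spaces, and let b : U × U′ → L be an L-bilinear map. Let M ⊆ U and M′ ⊆ U′ be K-subspaces such that b(m, m′) lies in K for all m ∈ M and m′ ∈ M′, such that M spans U over L and M′ spans U′ over L. Let N = M / {m ∈ M : b(m, m′) = 0 for all m′ ∈ M′} and let Ū = U / {u ∈ U : b(u, u′) = 0 for all u′ ∈ U′}. Then the natural L-linear map L ⊗_K N → Ū induced by the inclusion M ⊆ U is an isomorphism. -/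
open TensorProduct

/-- Let `b : U × U' → L` be `L`-bilinear, and `M ⊆ U`, `M' ⊆ U'` be `K`-subspaces pairing
into `K` which span `U`, `U'` over `L`.  Let `N` be `M` modulo the elements pairing to zero
with all of `M'`, and `Ū` be `U` modulo the left kernel of `b`.  Then the natural `L`-linear
map `L ⊗[K] N → Ū` induced by the inclusion `M ⊆ U` is an isomorphism. -/
theorem baseChange_quotient_iso (K L : Type*) [Field K] [Field L]
    [Algebra K L] (U U' : Type*) [AddCommGroup U] [Module L U] [AddCommGroup U']
    [Module L U'] [FiniteDimensional L U] [FiniteDimensional L U']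
    [Module K U] [IsScalarTower K L U] [Module K U'] [IsScalarTower K L U']
    (b : U →ₗ[L] U' →ₗ[L] L) (M : Submodule K U) (M' : Submodule K U')
    (hK : ∀ m ∈ M, ∀ m' ∈ M', b m m' ∈ (algebraMap K L).range)
    (hspanM : Submodule.span L (M : Set U) = ⊤)
    (hspanM' : Submodule.span L (M' : Set U') = ⊤) :
    ∃ e : (L ⊗[K] (M ⧸ leftKernel K L U U' b M M')) ≃ₗ[L] (U ⧸ LinearMap.ker b),
      ∀ (a : L) (m : M),
        e (a ⊗ₜ[K] Submodule.Quotient.mk m) = a • Submodule.Quotient.mk (m : U) := by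
  classical
  have hzero : ∀ u : U, (∀ m' ∈ M', b u m' = 0) → b u = 0 := by
    intro u hu
    have : Submodule.span L (M' : Set U') ≤ LinearMap.ker (b u) :=
      Submodule.span_le.2 fun m' hm' => hu m' hm'
    rw [hspanM'] at this
    exact LinearMap.ker_eq_top.1 (top_le_iff.1 this)
  let q : U →ₗ[K] (U ⧸ LinearMap.ker b) := (LinearMap.ker b).mkQ.restrictScalars K
  let f : (M ⧸ leftKernel K L U U' b M M') →ₗ[K] (U ⧸ LinearMap.ker b) :=
    (leftKernel K L U U' b M M').liftQ (q ∘ₗ M.subtype) (by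
      intro m hm
      exact (Submodule.Quotient.mk_eq_zero (LinearMap.ker b)).2 (hzero m.1 hm))
  let F : (L ⊗[K] (M ⧸ leftKernel K L U U' b M M')) →ₗ[L] (U ⧸ LinearMap.ker b) :=
    TensorProduct.AlgebraTensorModule.lift
      (LinearMap.toSpanSingleton L (_ →ₗ[K] (U ⧸ LinearMap.ker b)) f)
  have hF : ∀ (a : L) (m : M),
      F (a ⊗ₜ[K] Submodule.Quotient.mk m) = a • Submodule.Quotient.mk (m : U) := by
    intro a m
    rfl
  have hsurj : Function.Surjective F := by
    rw [← LinearMap.range_eq_top, ← top_le_iff]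
    rintro x -
    obtain ⟨u, rfl⟩ := Submodule.Quotient.mk_surjective _ x
    have : Submodule.span L (M : Set U) ≤ (LinearMap.range F).comap (LinearMap.ker b).mkQ :=
      Submodule.span_le.2 fun m hm =>
        ⟨1 ⊗ₜ[K] Submodule.Quotient.mk ⟨m, hm⟩, by rw [hF, one_smul]; rfl⟩
    rw [hspanM] at this
    exact this (Submodule.mem_top (x := u))
  obtain ⟨ι, B, hB⟩ : ∃ (ι : Set U') (B : Module.Basis ι L U'), ∀ i, B i ∈ M' :=
    ⟨_, Module.Basis.ofSpan hspanM'.ge,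
      fun i => Module.Basis.ofSpan_subset hspanM'.ge ⟨i, rfl⟩⟩
  have := Module.Finite.finite_basis B
  have := Fintype.ofFinite ι
  have hinj : Function.Injective F := by
    choose g hg using fun (m : M) i => hK m.1 m.2 (B i) (hB i)
    have hinjK := (algebraMap K L).injective
    let φ₀ : M →ₗ[K] (ι → K) :=
      { toFun := g
        map_add' := fun x y => by
          ext i
          apply hinjK
          simp [hg]
        map_smul' := fun c x => by
          ext i
          apply hinjK
          have h1 : ((c • x : M) : U) = algebraMap K L c • (x : U) := by
            rw [Submodule.coe_smul_of_tower, algebraMap_smul]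
          rw [hg, h1]
          simp [hg, Algebra.smul_def] }
    have hker : LinearMap.ker φ₀ = leftKernel K L U U' b M M' := by
      ext m
      constructor
      · intro hm
        have h0 : b m.1 = 0 := B.ext fun i => by
          rw [← hg m i, show g m i = 0 from congrFun hm i]
          simp
        intro m' _
        rw [h0]
        rfl
      · intro hm
        change g m = 0
        ext i
        apply hinjK
        rw [hg, hm _ (hB i)]
        simp
    let φ := (leftKernel K L U U' b M M').liftQ φ₀ hker.ge
    have hφ : Function.Injective φ := by
      rw [← LinearMap.ker_eq_bot]
      exact Submodule.ker_liftQ_eq_bot _ _ _ hker.le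
    have hφL : Function.Injective (φ.baseChange L) :=
      Module.Flat.lTensor_preserves_injective_linearMap φ hφ
    let E := TensorProduct.piScalarRight K L L ι
    let ψ : (U ⧸ LinearMap.ker b) →ₗ[L] (ι → L) :=
      (LinearMap.ker b).liftQ (LinearMap.pi fun i => b.flip (B i)) (by
        intro u hu
        ext i
        simp [LinearMap.mem_ker.1 hu])
    have hcomp : ψ ∘ₗ F = E.toLinearMap ∘ₗ φ.baseChange L := by
      ext m i
      change ψ (F (1 ⊗ₜ[K] Submodule.Quotient.mk m)) i = E (1 ⊗ₜ[K] g m) i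
      rw [hF, one_smul]
      change b m.1 (B i) = _
      simp [E, ← hg, Algebra.smul_def]
    have hcinj : Function.Injective (ψ ∘ₗ F) := by
      rw [hcomp]
      exact E.injective.comp hφL
    exact Function.Injective.of_comp (f := ψ) hcinj
  exact ⟨LinearEquiv.ofBijective F ⟨hinj, hsurj⟩, hF⟩
end

section
/- Let p be a prime number and let C be an algebraic closure of the field ℚ_p of p-adic numbers, equipped with the spectral norm ‖·‖ (the unique multiplicative norm extending the p-adic absolute value on ℚ_p). Let P and Q be monic polynomials in ℚ_p[T] of the same degree d. Suppose that for every polynomial F with integer coefficients, the product of ‖F(a)‖ over the roots a of P in C (counted with multiplicity) equals the product of ‖F(b)‖ over the roots b of Q in C (counted with multiplicity). Then P = Q. -/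
open Polynomial Filter Topology in
/-- Continuity of the norm product under perturbations that are pointwise small. -/
lemma weil_tendsto {C : Type*} [Field C] (v : AbsoluteValue C ℝ) (s : Multiset C)
    (f : ℕ → C → C) (g : C → C)
    (hfg : ∀ a, Tendsto (fun k => v (f k a - g a)) atTop (𝓝 0)) :
    Tendsto (fun k => (s.map fun a => v (f k a)).prod) atTop
      (𝓝 (s.map fun a => v (g a)).prod) := by
  refine tendsto_multiset_prod (f := fun a k => v (f k a)) s fun a _ => ?_
  rw [tendsto_iff_dist_tendsto_zero]
  refine squeeze_zero (fun _ => dist_nonneg) (fun k => ?_) (hfg a)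
  rw [Real.dist_eq]
  exact v.abs_abv_sub_le_abv_sub _ _

open Polynomial Filter Topology in
/-- Polynomials over `ℚ_p` are pointwise limits of rational polynomials. -/
lemma weil_approx (p : ℕ) [Fact p.Prime]
    (C : Type*) [Field C] [Algebra ℚ_[p] C]
    (v : AbsoluteValue C ℝ) (hv : ∀ x : ℚ_[p], v (algebraMap ℚ_[p] C x) = ‖x‖)
    (F : ℚ_[p][X]) : ∃ G : ℕ → ℚ[X], ∀ a : C,
      Tendsto (fun k => v (aeval a ((G k).map (algebraMap ℚ ℚ_[p])) - aeval a F)) atTop (𝓝 0) := by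
  induction F using Polynomial.induction_on' with
  | add F₁ F₂ h₁ h₂ =>
    obtain ⟨G₁, h₁⟩ := h₁
    obtain ⟨G₂, h₂⟩ := h₂
    refine ⟨fun k => G₁ k + G₂ k, fun a => ?_⟩
    refine squeeze_zero (fun _ => v.nonneg _) (fun k => ?_) (by simpa using (h₁ a).add (h₂ a))
    refine le_trans (le_of_eq ?_) (v.add_le _ _)
    congr 1
    simp only [Polynomial.map_add, map_add]
    ring
  | monomial n c =>
    have : ∀ k : ℕ, ∃ r : ℚ, ‖c - r‖ < 1 / ((k : ℝ) + 1) := fun k =>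
      Padic.rat_dense p c (by positivity)
    choose r hr using this
    refine ⟨fun k => monomial n (r k), fun a => ?_⟩
    have hlim : Tendsto (fun k : ℕ => 1 / ((k : ℝ) + 1) * v a ^ n) atTop (𝓝 0) := by
      simpa using (tendsto_one_div_add_atTop_nhds_zero_nat (𝕜 := ℝ)).mul_const (v a ^ n)
    refine squeeze_zero (fun _ => v.nonneg _) (fun k => ?_) hlim
    rw [Polynomial.map_monomial, aeval_monomial, aeval_monomial, ← sub_mul, ← map_sub, map_mul,
      map_pow, hv, norm_sub_rev]
    refine mul_le_mul_of_nonneg_right ?_ (pow_nonneg (v.nonneg _) _)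
    simpa using (hr k).le

open Polynomial Filter Topology in
/-- Equality of norm products over `ℤ[T]` implies it over `ℚ_p[T]`. -/
lemma weil_extend (p : ℕ) [Fact p.Prime]
    (C : Type*) [Field C] [Algebra ℚ_[p] C]
    (v : AbsoluteValue C ℝ) (hv : ∀ x : ℚ_[p], v (algebraMap ℚ_[p] C x) = ‖x‖)
    (s t : Multiset C) (hst : s.card = t.card)
    (h : ∀ F : ℤ[X], (s.map fun a => v (aeval a F)).prod = (t.map fun a => v (aeval a F)).prod)
    (F : ℚ_[p][X]) :
    (s.map fun a => v (aeval a F)).prod = (t.map fun a => v (aeval a F)).prod := by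
  have hQ : ∀ G : ℚ[X], (s.map fun a => v (aeval a (G.map (algebraMap ℚ ℚ_[p])))).prod =
      (t.map fun a => v (aeval a (G.map (algebraMap ℚ ℚ_[p])))).prod := by
    intro G
    obtain ⟨b, hb, hG⟩ := IsLocalization.integerNormalization_spec (nonZeroDivisors ℤ) G
    have hb0 : b ≠ 0 := nonZeroDivisors.ne_zero hb
    set H := IsLocalization.integerNormalization (nonZeroDivisors ℤ) G
    have key : ∀ a : C, v (aeval a H) =
        ‖(b : ℚ_[p])‖ * v (aeval a (G.map (algebraMap ℚ ℚ_[p]))) := by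
      intro a
      have h1 : aeval a H = aeval a ((H.map (algebraMap ℤ ℚ)).map (algebraMap ℚ ℚ_[p])) := by
        rw [Polynomial.map_map, aeval_def, aeval_def, eval₂_map]
        congr 1
        exact RingHom.ext_int _ _
      rw [h1, hG, ← hv, ← map_mul]
      congr 1
      simp [zsmul_eq_mul]
    have hh := h H
    simp only [key, Multiset.prod_map_mul, Multiset.map_const', Multiset.prod_replicate, hst] at hh
    refine mul_left_cancel₀ (pow_ne_zero _ ?_) hh
    simpa using hb0
  obtain ⟨G, hG⟩ := weil_approx p C v hv F
  have h1 := weil_tendsto v s (fun k a => aeval a ((G k).map (algebraMap ℚ ℚ_[p])))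
    (fun a => aeval a F) hG
  have h2 := weil_tendsto v t (fun k a => aeval a ((G k).map (algebraMap ℚ ℚ_[p])))
    (fun a => aeval a F) hG
  simp only [hQ] at h1
  exact tendsto_nhds_unique h1 h2

open Polynomial Filter Topology in
/-- Cancellation of a common sub-multiset of roots. -/
lemma weil_cancel (p : ℕ) [Fact p.Prime]
    (C : Type*) [Field C] [Algebra ℚ_[p] C]
    (v : AbsoluteValue C ℝ) (hv : ∀ x : ℚ_[p], v (algebraMap ℚ_[p] C x) = ‖x‖)
    (r s t : Multiset C)
    (h : ∀ F : ℚ_[p][X], ((r + s).map fun a => v (aeval a F)).prod =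
      ((r + t).map fun a => v (aeval a F)).prod)
    (F : ℚ_[p][X]) :
    (s.map fun a => v (aeval a F)).prod = (t.map fun a => v (aeval a F)).prod := by
  have hp1 : ‖(p : ℚ_[p])‖ < 1 := Padic.norm_p_lt_one
  have hp0 : (p : ℚ_[p]) ≠ 0 := by
    exact_mod_cast (Fact.out : p.Prime).ne_zero
  let f : ℕ → C → C := fun k a => aeval a (F + Polynomial.C ((p : ℚ_[p]) ^ k))
  have hf : ∀ a, Tendsto (fun k => v (f k a - aeval a F)) atTop (𝓝 0) := by
    intro a
    have : (fun k => v (f k a - aeval a F)) = fun k => ‖(p : ℚ_[p])‖ ^ k := by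
      funext k
      simp only [f, map_add, add_sub_cancel_left, aeval_C]
      rw [hv, norm_pow]
    rw [this]
    exact tendsto_pow_atTop_nhds_zero_of_lt_one (norm_nonneg _) hp1
  have hne : ∀ a, ∀ᶠ k in atTop, f k a ≠ 0 := by
    intro a
    by_cases ha : aeval a F = 0
    · refine Eventually.of_forall fun k => ?_
      simp only [f, map_add, ha, zero_add, aeval_C]
      rw [_root_.map_ne_zero]
      exact pow_ne_zero _ hp0
    · have := (hf a).eventually (gt_mem_nhds (v.pos ha))
      filter_upwards [this] with k hk h0
      rw [h0, zero_sub, v.map_neg] at hk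
      exact lt_irrefl _ hk
  have hev : ∀ᶠ k in atTop, ∀ a ∈ r, f k a ≠ 0 := by
    clear h
    induction r using Multiset.induction_on with
    | empty => simp
    | cons a r ih =>
      filter_upwards [ih, hne a] with k h1 h2
      simpa using ⟨h2, h1⟩
  have heq : ∀ᶠ k in atTop, (s.map fun a => v (f k a)).prod = (t.map fun a => v (f k a)).prod := by
    filter_upwards [hev] with k hk
    have := h (F + Polynomial.C ((p : ℚ_[p]) ^ k))
    simp only [Multiset.map_add, Multiset.prod_add] at this
    refine mul_left_cancel₀ ?_ this
    refine Multiset.prod_ne_zero fun hx => ?_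
    obtain ⟨a, ha, ha0⟩ := Multiset.mem_map.1 hx
    exact v.ne_zero (hk a ha) ha0
  exact tendsto_nhds_unique ((weil_tendsto v s f _ hf).congr' heq) (weil_tendsto v t f _ hf)

open Polynomial in
/-- The lemma with `ℚ_p`-coefficients. -/
lemma weil_main (p : ℕ) [Fact p.Prime]
    (C : Type*) [Field C] [Algebra ℚ_[p] C] [IsAlgClosed C]
    (v : AbsoluteValue C ℝ) (hv : ∀ x : ℚ_[p], v (algebraMap ℚ_[p] C x) = ‖x‖)
    (d : ℕ) : ∀ (P Q : ℚ_[p][X]), P.Monic → Q.Monic → P.natDegree = d → Q.natDegree = d →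
    (∀ F : ℚ_[p][X],
      (((P.map (algebraMap ℚ_[p] C)).roots.map fun a => v (aeval a F)).prod) =
      (((Q.map (algebraMap ℚ_[p] C)).roots.map fun a => v (aeval a F)).prod)) → P = Q := by
  induction d using Nat.strong_induction_on with
  | _ d ih =>
  intro P Q hP hQ hdP hdQ h
  by_cases hd : d = 0
  · rw [hP.natDegree_eq_zero.1 (hdP.trans hd), hQ.natDegree_eq_zero.1 (hdQ.trans hd)]
  · obtain ⟨g, hgm, hgi, P', rfl⟩ := exists_monic_irreducible_factor P
      (not_isUnit_of_natDegree_pos _ (by omega))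
    have hP' : P'.Monic := hgm.of_mul_monic_left hP
    have hinj := FaithfulSMul.algebraMap_injective ℚ_[p] C
    -- `g` divides `Q`
    have hgQ : g ∣ Q := by
      obtain ⟨a, ha⟩ := IsAlgClosed.exists_aeval_eq_zero C g hgi.degree_pos.ne'
      have h0 := h g
      rw [Multiset.prod_eq_zero (s := Multiset.map _ (map _ (g * P')).roots)] at h0
      · have h0 := Multiset.prod_eq_zero_iff.1 h0.symm
        obtain ⟨b, hb, hb0⟩ := Multiset.mem_map.1 h0
        have hb0 : aeval b g = 0 := v.eq_zero.1 hb0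
        rw [minpoly.eq_of_irreducible_of_monic hgi hb0 hgm]
        refine minpoly.dvd _ _ ?_
        simpa [IsRoot, eval_map_algebraMap] using isRoot_of_mem_roots hb
      · refine Multiset.mem_map.2 ⟨a, ?_, by rw [ha, map_zero]⟩
        rw [mem_roots (hP.map _).ne_zero]
        simp [IsRoot, eval_map_algebraMap, ha]
    obtain ⟨Q', rfl⟩ := hgQ
    have hQ' : Q'.Monic := hgm.of_mul_monic_left hQ
    have hgd := hgi.natDegree_pos
    rw [hgm.natDegree_mul hP'] at hdP
    rw [hgm.natDegree_mul hQ'] at hdQ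
    congr 1
    refine ih P'.natDegree (by omega) P' Q' hP' hQ' rfl (by omega) ?_
    refine weil_cancel p C v hv (g.map (algebraMap ℚ_[p] C)).roots _ _ ?_
    rw [← roots_mul ((hgm.map _).mul (hP'.map _)).ne_zero,
      ← roots_mul ((hgm.map _).mul (hQ'.map _)).ne_zero, ← Polynomial.map_mul,
      ← Polynomial.map_mul]
    exact h

/-- Weil's elementary lemma (Weil 1948b, Lemme 12): a monic polynomial over `ℚ_p` is
determined by the values `‖∏ᵢ F(aᵢ)‖` (over its roots `aᵢ`, with multiplicity, in an
algebraic closure `C` of `ℚ_p` equipped with the unique absolute value extending the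
`p`-adic one) as `F` runs over the polynomials with integer coefficients. -/
theorem monic_poly_eq_of_int_norm_products (p : ℕ) [Fact p.Prime]
    (C : Type*) [Field C] [Algebra ℚ_[p] C] [IsAlgClosure ℚ_[p] C]
    (v : AbsoluteValue C ℝ) (hv : ∀ x : ℚ_[p], v (algebraMap ℚ_[p] C x) = ‖x‖)
    (d : ℕ) (P Q : Polynomial ℚ_[p]) (hP : P.Monic) (hQ : Q.Monic)
    (hdP : P.natDegree = d) (hdQ : Q.natDegree = d)
    (h : ∀ F : Polynomial ℤ,
      (((P.map (algebraMap ℚ_[p] C)).roots.map fun a => v (Polynomial.aeval a F)).prod) =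
      (((Q.map (algebraMap ℚ_[p] C)).roots.map fun a => v (Polynomial.aeval a F)).prod)) :
    P = Q := by
  have hC : IsAlgClosed C := IsAlgClosure.isAlgClosed ℚ_[p]
  refine weil_main p C v hv d P Q hP hQ hdP hdQ ?_
  refine weil_extend p C v hv _ _ ?_ h
  rw [← (IsAlgClosed.splits _).natDegree_eq_card_roots,
    ← (IsAlgClosed.splits _).natDegree_eq_card_roots, Polynomial.natDegree_map,
    Polynomial.natDegree_map, hdP, hdQ]
end
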